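/- Let μ be an ergodic process on Σ = 𝒜^{ℤ_{≥0}^d} with entropy rate h(μ) = h, let δ ∈ (0, 1/2), and let m = m(k) be any function with m(k) → ∞ and m(k)/k → 0 as k → ∞. Then: (i) for all sufficiently large k, the typical sampling set satisfies log|𝒯_k^μ(δ/2, m(k))| / k^d ≤ h + δ; and (ii) for μ-almost every x and every sufficiently large k, there is n_0 = n_0(x,k) such that 𝜇̃_x^{k,n}(𝒯_k^μ(δ/2, m(k))) > 1 − δ for all n ≥ n_0. -/

import Mathlib

open MeasureTheory Filter Topology

namespace SRU1408

/-- A site of the lattice `ℤ_{≥0}^d`. -/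
abbrev Site (d : ℕ) := Fin d → ℕ

/-- An infinite array over the alphabet `Fin A`, i.e. an element of `Σ = 𝒜^{ℤ_{≥0}^d}`. -/
abbrev Config (A d : ℕ) := Site d → Fin A

/-- A cubical `k`-word, i.e. an element of `Σ^k = 𝒜^{Λ_k}`. -/
abbrev Word (A d k : ℕ) := (Fin d → Fin k) → Fin A

variable {A d : ℕ}

/-- The pattern of `x` on the cube `Λ_k + c`, as a `k`-word. -/
def wordAt (x : Config A d) (k : ℕ) (c : Site d) : Word A d k :=
  fun i => x fun j => c j + (i j : ℕ)

/-- The lattice shift `σ_r`. -/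
def shift (r : Site d) (x : Config A d) : Config A d := fun i => x (i + r)

/-- Stationarity: invariance under all shifts. -/
def Stationary (μ : Measure (Config A d)) : Prop := ∀ r : Site d, μ.map (shift r) = μ

/-- Ergodicity: stationary, and every measurable set invariant under all shifts is trivial. -/
def ErgodicShift (μ : Measure (Config A d)) : Prop :=
  Stationary μ ∧ ∀ E : Set (Config A d), MeasurableSet E →
    (∀ r : Site d, shift r ⁻¹' E = E) → μ E = 0 ∨ μ E = 1

/-- The `k`-word marginal distribution `μ^k`, as a probability vector on `Σ^k`. -/
noncomputable def wordDist (μ : Measure (Config A d)) (k : ℕ) : Word A d k → ℝ :=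
  fun w => (μ {x | wordAt x k 0 = w}).toReal

/-- Base-`A` entropy of a probability vector. -/
noncomputable def entH (A : ℕ) {W : Type*} [Fintype W] (p : W → ℝ) : ℝ :=
  -∑ w, p w * Real.logb A (p w)

/-- `μ` has entropy rate `h` (base-`A` logarithms): `H(μ^n)/n^d → h`. -/
def HasEntropyRate (μ : Measure (Config A d)) (h : ℝ) : Prop :=
  Tendsto (fun n : ℕ => entH A (wordDist μ n) / (n : ℝ) ^ d) atTop (𝓝 h)

/-- The pattern of a `k`-word on the sub-cube `Λ_m + c` (junk value outside the range). -/
def subw [NeZero A] {k : ℕ} (w : Word A d k) (m : ℕ) (c : Site d) : Word A d m :=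
  fun i => if h : ∀ j, c j + (i j : ℕ) < k then w (fun j => ⟨c j + (i j : ℕ), h j⟩) else 0

/-- The empirical non-overlapping `k`-block distribution `𝜇̃_x^{k,n}` of `x` over `Λ_n`. -/
noncomputable def empDist (x : Config A d) (k n : ℕ) : Word A d k → ℝ := fun w =>
  (Set.ncard {r : Fin d → Fin (n / k) | wordAt x k (fun j => k * (r j : ℕ)) = w} : ℝ) /
    ((n / k : ℕ) : ℝ) ^ d

/-- The empirical probability `𝜇̃_x^{k,n}(S)` of a set `S` of `k`-words. -/
noncomputable def empProb (x : Config A d) (k n : ℕ) (S : Set (Word A d k)) : ℝ :=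
  (Set.ncard {r : Fin d → Fin (n / k) | wordAt x k (fun j => k * (r j : ℕ)) ∈ S} : ℝ) /
    ((n / k : ℕ) : ℝ) ^ d

/-- `k(n) = ⌊(log_A n^d)^{1/d}⌋`. -/
noncomputable def kOf (A d n : ℕ) : ℕ :=
  ⌊(Real.logb A ((n : ℝ) ^ d)) ^ (1 / (d : ℝ))⌋₊

/-- The level-`δ` entropy typical set `C_m^μ(δ)`, relative to the entropy rate value `h`. -/
noncomputable def entropyTypical (μ : Measure (Config A d)) (h δ : ℝ) (m : ℕ) :
    Set (Word A d m) :=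
  {w | (A : ℝ) ^ (-((m : ℝ) ^ d * (h + δ))) ≤ wordDist μ m w ∧
    wordDist μ m w ≤ (A : ℝ) ^ (-((m : ℝ) ^ d * (h - δ)))}

/-- The typical sampling set `𝒯_k^μ(δ, m)`: words having, for some offset `p ∈ Λ_m`, at least
`(1-δ)(k/m)^d` blocks of the `p`-shifted regular `m`-grid carrying entropy typical words. -/
noncomputable def samplingTypical [NeZero A] (μ : Measure (Config A d)) (h δ : ℝ) (m k : ℕ) :
    Set (Word A d k) :=
  {w | ∃ p : Site d, (∀ j, p j < m) ∧
    (1 - δ) * ((k : ℝ) / (m : ℝ)) ^ d ≤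
      (Set.ncard {r : Site d | (∀ j, m * r j + p j + m ≤ k) ∧
        subw w m (fun j => m * r j + p j) ∈ entropyTypical μ h δ m} : ℝ)}

/-! ### Cubes in the lattice -/

/-- The cube `Λ_n` as a finite set of sites. -/
def box (d n : ℕ) : Finset (Site d) := Fintype.piFinset fun _ => Finset.range n

theorem mem_box {n : ℕ} {i : Site d} : i ∈ box d n ↔ ∀ j, i j < n := by simp [box]

theorem card_box (n : ℕ) : (box d n).card = n ^ d := by simp [box]

theorem box_mono {n n' : ℕ} (hn : n ≤ n') : box d n ⊆ box d n' := fun _ hi =>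
  mem_box.2 fun j => (mem_box.1 hi j).trans_le hn

/-! ### Shifts and sums along cubes -/

theorem shift_shift (r s : Site d) (x : Config A d) : shift r (shift s x) = shift (r + s) x := by
  funext i; simp [shift, add_assoc]

theorem measurable_shift (r : Site d) : Measurable (shift r : Config A d → Config A d) :=
  measurable_pi_lambda _ fun i => measurable_pi_apply (i + r)

theorem Stationary.measurePreserving {μ : Measure (Config A d)} (hμ : Stationary μ) (r : Site d) :
    MeasurePreserving (shift r) μ μ := ⟨measurable_shift r, hμ r⟩

/-- The sum of `f` along the orbit of `x` over the cube `Λ_n`. -/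
def shiftSum (f : Config A d → ℝ) (n : ℕ) (x : Config A d) : ℝ := ∑ i ∈ box d n, f (shift i x)

theorem measurable_shiftSum {f : Config A d → ℝ} (hf : Measurable f) (n : ℕ) :
    Measurable (shiftSum f n) :=
  Finset.measurable_sum _ fun i _ => hf.comp (measurable_shift i)

theorem abs_sum_sub_sum_le {ι : Type*} [DecidableEq ι] {s t : Finset ι} (hst : s ⊆ t) {g : ι → ℝ}
    {B : ℝ} (hg : ∀ i, |g i| ≤ B) : |∑ i ∈ t, g i - ∑ i ∈ s, g i| ≤ B * (t.card - s.card) := by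
  rw [← Finset.sum_sdiff hst, add_sub_cancel_right]
  refine (Finset.abs_sum_le_sum_abs _ _).trans ((Finset.sum_le_sum fun i _ => hg i).trans ?_)
  rw [Finset.sum_const, nsmul_eq_mul, Finset.card_sdiff_of_subset hst,
    Nat.cast_sub (Finset.card_le_card hst), mul_comm]

theorem abs_shiftSum_shift_sub_le {f : Config A d → ℝ} {B : ℝ} (hf : ∀ x, |f x| ≤ B)
    (r : Site d) {R : ℕ} (hR : ∀ j, r j ≤ R) (n : ℕ) (x : Config A d) :
    |shiftSum f n (shift r x) - shiftSum f n x| ≤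
      2 * B * ((n : ℝ) ^ d - ((n - R : ℕ) : ℝ) ^ d) := by
  classical
  have h1 := abs_sum_sub_sum_le (box_mono (d := d) (Nat.sub_le n R))
    (g := fun i => f (shift i (shift r x))) (fun i => hf _)
  have hsub : (box d (n - R)).map (addRightEmbedding r) ⊆ box d n := by
    intro i hi
    simp only [Finset.mem_map, addRightEmbedding_apply] at hi
    obtain ⟨a, ha, rfl⟩ := hi
    refine mem_box.2 fun j => ?_
    have := mem_box.1 ha j
    have := hR j
    simp only [Pi.add_apply]
    omega
  have h2 := abs_sum_sub_sum_le hsub (g := fun i => f (shift i x)) (fun i => hf _)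
  rw [Finset.card_map, Finset.sum_map] at h2
  simp only [card_box, addRightEmbedding_apply, shift_shift, Nat.cast_pow] at h1 h2
  simp only [shiftSum, shift_shift]
  rw [abs_le] at *
  constructor <;> linarith [h1.1, h1.2, h2.1, h2.2]

theorem tendsto_sub_pow_div_pow (d R : ℕ) :
    Tendsto (fun n : ℕ => ((n - R : ℕ) : ℝ) ^ d / (n : ℝ) ^ d) atTop (𝓝 1) := by
  have h : Tendsto (fun n : ℕ => (1 - (R : ℝ) / n) ^ d) atTop (𝓝 ((1 - 0) ^ d)) :=
    (tendsto_const_nhds.sub (tendsto_const_div_atTop_nhds_zero_nat (R : ℝ))).pow d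
  simp only [sub_zero, one_pow] at h
  refine h.congr' ?_
  filter_upwards [eventually_ge_atTop (R + 1)] with n hn
  rw [← div_pow, Nat.cast_sub (by omega), sub_div, div_self (by norm_cast; omega)]

theorem eventually_pow_sub_sub_pow_le (d R : ℕ) {ε : ℝ} (hε : 0 < ε) :
    ∀ᶠ n : ℕ in atTop, (n : ℝ) ^ d - ((n - R : ℕ) : ℝ) ^ d ≤ ε * (n : ℝ) ^ d := by
  filter_upwards [(tendsto_sub_pow_div_pow d R).eventually (lt_mem_nhds (sub_lt_self 1 hε)),
    eventually_gt_atTop 0] with n hn h0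
  rw [lt_div_iff₀ (by positivity)] at hn
  linarith

/-- `g` and `f` have the same averages over large cubes, uniformly in the starting point. -/
def SameAverages (f g : Config A d → ℝ) : Prop :=
  ∀ ε > 0, ∀ᶠ n : ℕ in atTop, ∀ x, |shiftSum g n x - shiftSum f n x| ≤ ε * (n : ℝ) ^ d

theorem sameAverages_comp_shift {f : Config A d → ℝ} {B : ℝ} (hf : ∀ x, |f x| ≤ B)
    (r : Site d) : SameAverages f (fun x => f (shift r x)) := by
  intro ε hε
  have hR : ∀ j, r j ≤ ∑ j, r j := fun j => Finset.single_le_sum (fun _ _ => Nat.zero_le _)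
    (Finset.mem_univ j)
  have hB : 0 ≤ |B| := abs_nonneg B
  filter_upwards [eventually_pow_sub_sub_pow_le d (∑ j, r j)
    (show 0 < ε / (2 * |B| + 1) by positivity)] with n hn x
  have h1 := abs_shiftSum_shift_sub_le (fun x => (hf x).trans (le_abs_self B)) r hR n x
  have h2 : shiftSum (fun x => f (shift r x)) n x = shiftSum f n (shift r x) := by
    simp only [shiftSum, shift_shift, add_comm]
  rw [h2]
  refine h1.trans ?_
  calc 2 * |B| * ((n : ℝ) ^ d - ((n - ∑ j, r j : ℕ) : ℝ) ^ d)
      ≤ 2 * |B| * (ε / (2 * |B| + 1) * (n : ℝ) ^ d) := by gcongr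
    _ = (2 * |B| / (2 * |B| + 1)) * (ε * (n : ℝ) ^ d) := by ring
    _ ≤ 1 * (ε * (n : ℝ) ^ d) := by
        gcongr
        rw [div_le_one (by positivity)]
        linarith
    _ = _ := one_mul _

theorem SameAverages.convex_comb {f g₁ g₂ : Config A d → ℝ} (h₁ : SameAverages f g₁)
    (h₂ : SameAverages f g₂) {a b : ℝ} (ha : 0 ≤ a) (hb : 0 ≤ b) (hab : a + b = 1) :
    SameAverages f (fun x => a * g₁ x + b * g₂ x) := by
  intro ε hε
  filter_upwards [h₁ ε hε, h₂ ε hε] with n h1 h2 x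
  have : shiftSum (fun x => a * g₁ x + b * g₂ x) n x - shiftSum f n x =
      a * (shiftSum g₁ n x - shiftSum f n x) + b * (shiftSum g₂ n x - shiftSum f n x) := by
    simp only [shiftSum, Finset.sum_add_distrib, ← Finset.mul_sum]
    linear_combination (∑ i ∈ box d n, f (shift i x)) * hab
  rw [this]
  calc _ ≤ |a * (shiftSum g₁ n x - shiftSum f n x)| + |b * (shiftSum g₂ n x - shiftSum f n x)| :=
        abs_add_le _ _
    _ ≤ a * (ε * (n : ℝ) ^ d) + b * (ε * (n : ℝ) ^ d) := by
        rw [abs_mul, abs_mul, abs_of_nonneg ha, abs_of_nonneg hb]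
        gcongr
        · exact h1 x
        · exact h2 x
    _ = ε * (n : ℝ) ^ d := by rw [← add_mul, hab, one_mul]

/-! ### Almost invariant functions are almost everywhere constant -/

theorem ErgodicShift.measure_eq_zero_or_one_of_ae_invariant {μ : Measure (Config A d)}
    (hμ : ErgodicShift μ) {s : Set (Config A d)} (hs : MeasurableSet s)
    (hinv : ∀ r : Site d, shift r ⁻¹' s =ᵐ[μ] s) : μ s = 0 ∨ μ s = 1 := by
  set E : Set (Config A d) := ⋃ N : Site d, ⋂ i : Site d, ⋂ (_ : N ≤ i), shift i ⁻¹' s with hE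
  have hmem : ∀ x, x ∈ E ↔ ∃ N : Site d, ∀ i, N ≤ i → shift i x ∈ s := fun x => by simp [hE]
  have hEm : MeasurableSet E := MeasurableSet.iUnion fun N => MeasurableSet.iInter fun i =>
    MeasurableSet.iInter fun _ => measurable_shift i hs
  have hEs : E =ᵐ[μ] s := by
    have : ∀ᵐ x ∂μ, ∀ r : Site d, (shift r x ∈ s ↔ x ∈ s) :=
      ae_all_iff.2 fun r => (hinv r).mem_iff
    refine Filter.eventuallyEq_set.2 ?_
    filter_upwards [this] with x hx
    rw [hmem]
    exact ⟨fun ⟨N, hN⟩ => (hx N).1 (hN N le_rfl), fun h => ⟨0, fun i _ => (hx i).2 h⟩⟩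
  rw [← measure_congr hEs]
  refine hμ.2 E hEm fun r => ?_
  ext x
  rw [Set.mem_preimage, hmem, hmem]
  constructor
  · rintro ⟨N, hN⟩
    refine ⟨N + r, fun i hi => ?_⟩
    have := hN (i - r) (le_tsub_of_add_le_right hi)
    rwa [shift_shift, tsub_add_cancel_of_le ((self_le_add_left r N).trans hi)] at this
  · rintro ⟨N, hN⟩
    exact ⟨N, fun i hi => by rw [shift_shift]; exact hN _ (hi.trans (self_le_add_right i r))⟩

theorem ErgodicShift.ae_eq_const {μ : Measure (Config A d)} [IsProbabilityMeasure μ]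
    (hμ : ErgodicShift μ) {g : Config A d → ℝ} (hg : Measurable g)
    (hinv : ∀ r : Site d, g ∘ shift r =ᵐ[μ] g) : ∃ c : ℝ, g =ᵐ[μ] fun _ => c := by
  refine Filter.exists_eventuallyEq_const_of_forall_separating (MeasurableSet : Set ℝ → Prop)
    fun U hU => ?_
  rcases hμ.measure_eq_zero_or_one_of_ae_invariant (hg hU) (fun r => by
    refine Filter.eventuallyEq_set.2 ?_
    filter_upwards [hinv r] with x hx
    simp only [Set.mem_preimage]
    rw [← hx]; rfl) with h | h
  · right
    rw [ae_iff]
    simp only [not_not]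
    exact h
  · left
    exact (prob_compl_eq_zero_iff (hg hU)).2 h

/-! ### A maximal inequality for averages over cubes -/

theorem mul_card_le_of_forall_lt_sum {φ : Site d → ℝ} (hφ : ∀ i, 0 ≤ φ i) {t : ℝ} (ht : 0 < t)
    {M N : ℕ} {Z : Finset (Site d)} (hZ : Z ⊆ box d N) {n : Site d → ℕ}
    (hn : ∀ i ∈ Z, 1 ≤ n i ∧ n i ≤ M ∧ t * (n i : ℝ) ^ d < ∑ a ∈ box d (n i), φ (a + i)) :
    t * Z.card ≤ 3 ^ d * ∑ i ∈ box d (N + M), φ i := by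
  classical
  set cube : Site d → Finset (Site d) := fun i => (box d (n i)).map (addRightEmbedding i)
    with hcube
  have mem_cube : ∀ i s, s ∈ cube i ↔ ∀ j, i j ≤ s j ∧ s j < i j + n i := by
    intro i s
    simp only [hcube, Finset.mem_map, addRightEmbedding_apply]
    constructor
    · rintro ⟨a, ha, rfl⟩ j
      have := mem_box.1 ha j
      simp only [Pi.add_apply]
      omega
    · intro h
      refine ⟨s - i, mem_box.2 fun j => ?_, tsub_add_cancel_of_le fun j => (h j).1⟩
      have := h j
      simp only [Pi.sub_apply]
      omega
  obtain ⟨u, huZ, hud, hu⟩ := Vitali.exists_disjoint_subfamily_covering_enlargement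
    (fun i => (cube i : Set (Site d))) (Z : Set (Site d)) (fun i => (n i : ℝ)) 2 one_lt_two
    (fun i _ => Nat.cast_nonneg _) M (fun i hi => by exact_mod_cast (hn i hi).2.1)
    (fun i hi => ⟨i, by
      rw [Finset.mem_coe, mem_cube]
      have := (hn i hi).1
      intro j; omega⟩)
  set U : Finset (Site d) := Z.filter (· ∈ u) with hU
  have hUZ : U ⊆ Z := Finset.filter_subset _ _
  have mem_U : ∀ i, i ∈ U ↔ i ∈ u := fun i => by
    simp only [hU, Finset.mem_filter]
    exact ⟨fun h => h.2, fun h => ⟨huZ h, h⟩⟩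
  have hcov : Z ⊆ U.biUnion fun b =>
      Fintype.piFinset fun j => Finset.Ico (b j + 1 - 2 * n b) (b j + n b) := by
    intro a ha
    obtain ⟨b, hb, ⟨s, hsa, hsb⟩, hab⟩ := hu a ha
    rw [Finset.mem_coe, mem_cube] at hsa hsb
    have hab' : n a ≤ 2 * n b := by exact_mod_cast hab
    refine Finset.mem_biUnion.2 ⟨b, (mem_U b).2 hb, Fintype.mem_piFinset.2 fun j => ?_⟩
    have := hsa j
    have := hsb j
    rw [Finset.mem_Ico]
    omega
  have hcard : (Z.card : ℝ) ≤ ∑ b ∈ U, (3 : ℝ) ^ d * (n b : ℝ) ^ d := by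
    have h1 : Z.card ≤ ∑ b ∈ U, 3 ^ d * n b ^ d := by
      refine (Finset.card_le_card hcov).trans (Finset.card_biUnion_le.trans
        (Finset.sum_le_sum fun b hb => ?_))
      rw [Fintype.card_piFinset, ← mul_pow]
      refine (Finset.prod_le_pow_card _ _ (3 * n b) fun j _ => ?_).trans (by simp)
      rw [Nat.card_Ico]
      omega
    exact_mod_cast h1
  have hsum : ∑ b ∈ U, ∑ s ∈ cube b, φ s ≤ ∑ i ∈ box d (N + M), φ i := by
    rw [← Finset.sum_biUnion]
    · refine Finset.sum_le_sum_of_subset_of_nonneg ?_ fun i _ _ => hφ i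
      intro s hs
      obtain ⟨b, hb, hs⟩ := Finset.mem_biUnion.1 hs
      rw [mem_cube] at hs
      refine mem_box.2 fun j => ?_
      have := mem_box.1 (hZ (hUZ hb)) j
      have := (hn b (hUZ hb)).2.1
      have := hs j
      omega
    · intro a ha b hb hab
      exact Finset.disjoint_coe.1 (hud ((mem_U a).1 ha) ((mem_U b).1 hb) hab)
  calc t * Z.card ≤ t * ∑ b ∈ U, (3 : ℝ) ^ d * (n b : ℝ) ^ d := by gcongr
    _ = 3 ^ d * ∑ b ∈ U, t * (n b : ℝ) ^ d := by
        rw [Finset.mul_sum, Finset.mul_sum]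
        exact Finset.sum_congr rfl fun _ _ => by ring
    _ ≤ 3 ^ d * ∑ b ∈ U, ∑ s ∈ cube b, φ s := by
        gcongr with b hb
        refine (hn b (hUZ hb)).2.2.le.trans_eq ?_
        rw [hcube, Finset.sum_map]
        rfl
    _ ≤ _ := by gcongr

theorem integral_shiftSum {μ : Measure (Config A d)} (hμ : Stationary μ)
    {f : Config A d → ℝ} (hf : Integrable f μ) (n : ℕ) :
    Integrable (shiftSum f n) μ ∧ ∫ x, shiftSum f n x ∂μ = (n : ℝ) ^ d * ∫ x, f x ∂μ := by
  have h1 : ∀ i : Site d, Integrable (fun x => f (shift i x)) μ := fun i =>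
    (hμ.measurePreserving i).integrable_comp_of_integrable hf
  refine ⟨integrable_finsetSum _ fun i _ => h1 i, ?_⟩
  unfold shiftSum
  rw [integral_finsetSum _ fun i _ => h1 i]
  have h2 : ∀ i : Site d, ∫ x, f (shift i x) ∂μ = ∫ x, f x ∂μ := fun i => by
    have hf' : AEStronglyMeasurable f (μ.map (shift i)) := by
      rw [hμ i]; exact hf.aestronglyMeasurable
    rw [← integral_map (measurable_shift i).aemeasurable hf', hμ i]
  simp only [h2, Finset.sum_const, card_box, nsmul_eq_mul, Nat.cast_pow]

theorem measure_exists_lt_shiftSum_le {μ : Measure (Config A d)} [IsProbabilityMeasure μ]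
    (hμ : Stationary μ) {φ : Config A d → ℝ} (hm : Measurable φ) (hi : Integrable φ μ)
    (hφ : ∀ x, 0 ≤ φ x) {t : ℝ} (ht : 0 < t) :
    μ.real {x | ∃ n : ℕ, 1 ≤ n ∧ t * (n : ℝ) ^ d < shiftSum φ n x} ≤ 3 ^ d * (∫ x, φ x ∂μ) / t := by
  classical
  set E : ℕ → Set (Config A d) := fun M =>
    {x | ∃ n : ℕ, 1 ≤ n ∧ n ≤ M ∧ t * (n : ℝ) ^ d < shiftSum φ n x} with hE
  have hEm : ∀ M, MeasurableSet (E M) := fun M => by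
    have : E M = ⋃ n : ℕ, ⋃ _ : 1 ≤ n ∧ n ≤ M, {x | t * (n : ℝ) ^ d < shiftSum φ n x} := by
      ext x; simp [hE, and_assoc]
    rw [this]
    exact MeasurableSet.iUnion fun n => MeasurableSet.iUnion fun _ =>
      measurableSet_lt measurable_const (measurable_shiftSum hm n)
  have hpt : ∀ (M N : ℕ) x, t * shiftSum ((E M).indicator 1) N x ≤ 3 ^ d * shiftSum φ (N + M) x := by
    intro M N x
    set Z := (box d N).filter fun i => shift i x ∈ E M with hZ
    have hZc : shiftSum ((E M).indicator 1) N x = Z.card := by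
      simp only [shiftSum, Set.indicator_apply, hZ, Pi.one_apply, Finset.sum_boole]
    have : ∀ i ∈ Z, ∃ n : ℕ, 1 ≤ n ∧ n ≤ M ∧ t * (n : ℝ) ^ d < shiftSum φ n (shift i x) :=
      fun i hi => (Finset.mem_filter.1 hi).2
    choose! n hn using this
    rw [hZc]
    refine mul_card_le_of_forall_lt_sum (φ := fun i => φ (shift i x)) (fun i => hφ _) ht
      (Finset.filter_subset _ _) (n := n) fun i hi => ?_
    have := hn i hi
    simpa only [shiftSum, shift_shift] using this
  have hfin : ∀ M, μ.real (E M) ≤ 3 ^ d * (∫ x, φ x ∂μ) / t := by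
    intro M
    rw [le_div_iff₀ ht]
    have hint : ∀ N : ℕ, t * ((N : ℝ) ^ d * μ.real (E M)) ≤
        3 ^ d * (((N + M : ℕ) : ℝ) ^ d * ∫ x, φ x ∂μ) := by
      intro N
      have h1 : Integrable ((E M).indicator (1 : Config A d → ℝ)) μ :=
        (integrable_const (1 : ℝ)).indicator (hEm M)
      have h2 := integral_shiftSum hμ h1 N
      have h3 := integral_shiftSum hμ hi (N + M)
      rw [integral_indicator_one (hEm M)] at h2
      rw [← h2.2, ← h3.2, ← integral_const_mul, ← integral_const_mul]
      exact integral_mono (h2.1.const_mul _) (h3.1.const_mul _) (hpt M N)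
    have hlim := ((tendsto_sub_pow_div_pow d M).mul_const (μ.real (E M) * t))
    rw [one_mul] at hlim
    refine le_of_tendsto hlim ?_
    filter_upwards [eventually_ge_atTop (M + 1)] with n hn
    have := hint (n - M)
    rw [Nat.sub_add_cancel (by omega)] at this
    have hn0 : (0 : ℝ) < (n : ℝ) ^ d := by
      have : 0 < n := by omega
      positivity
    rw [div_mul_eq_mul_div, div_le_iff₀ hn0]
    linarith
  have hun : {x | ∃ n : ℕ, 1 ≤ n ∧ t * (n : ℝ) ^ d < shiftSum φ n x} = ⋃ M, E M := by
    ext x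
    simp only [hE, Set.mem_iUnion, Set.mem_ofPred_eq]
    exact ⟨fun ⟨n, h1, h2⟩ => ⟨n, n, h1, le_rfl, h2⟩, fun ⟨_, n, h1, _, h2⟩ => ⟨n, h1, h2⟩⟩
  have hmono : Monotone E := fun M M' hM x ⟨n, h1, h2, h3⟩ => ⟨n, h1, h2.trans hM, h3⟩
  rw [hun]
  have hc : 0 ≤ 3 ^ d * (∫ x, φ x ∂μ) / t := measureReal_nonneg.trans (hfin 0)
  refine ENNReal.toReal_le_of_le_ofReal hc ?_
  rw [hmono.measure_iUnion]
  exact iSup_le fun M => (ENNReal.le_ofReal_iff_toReal_le (measure_ne_top _ _) hc).2 (hfin M)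

/-! ### The pointwise ergodic theorem for bounded functions, upper half -/

theorem ErgodicShift.exists_sameAverages_integral_abs_sub_le {μ : Measure (Config A d)}
    [IsProbabilityMeasure μ] (hμ : ErgodicShift μ) {f : Config A d → ℝ} (hf : Measurable f)
    {B : ℝ} (hB : ∀ x, |f x| ≤ B) {ε : ℝ} (hε : 0 < ε) :
    ∃ g : Config A d → ℝ, Measurable g ∧ (∃ B', ∀ x, |g x| ≤ B') ∧ SameAverages f g ∧
      ∫ x, |g x - ∫ y, f y ∂μ| ∂μ ≤ ε := by
  have hfL : MemLp f 2 μ := MemLp.of_bound hf.aestronglyMeasurable B (ae_of_all _ hB)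
  set F : Lp ℝ 2 μ := hfL.toLp f with hF
  set T : Site d → (Lp ℝ 2 μ →ₗᵢ[ℝ] Lp ℝ 2 μ) := fun r =>
    Lp.compMeasurePreservingₗᵢ ℝ (shift r) (hμ.1.measurePreserving r) with hT
  have hTcoe : ∀ r (g : Lp ℝ 2 μ), T r g =ᵐ[μ] g ∘ shift r := fun r g =>
    Lp.coeFn_compMeasurePreserving g (hμ.1.measurePreserving r)
  set K₀ : Set (Lp ℝ 2 μ) := convexHull ℝ (Set.range fun r => T r F) with hK₀
  set K := closure K₀ with hK
  have hKc : Convex ℝ K := (convex_convexHull ℝ _).closure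
  have hKne : K.Nonempty :=
    ⟨T 0 F, subset_closure (subset_convexHull ℝ _ (Set.mem_range_self 0))⟩
  have hTT : ∀ r s, T r (T s F) = T (s + r) F := by
    intro r s
    refine Lp.ext ?_
    have h1 := (hμ.1.measurePreserving r).quasiMeasurePreserving.ae_eq_comp (hTcoe s F)
    filter_upwards [hTcoe r (T s F), h1, hTcoe (s + r) F] with x h1 h2 h3
    rw [h1, h2, h3]
    simp only [Function.comp_apply, shift_shift]
  have hTK : ∀ r, ∀ v ∈ K, T r v ∈ K := by
    intro r
    refine fun v hv => map_mem_closure (T r).continuous hv fun w hw => ?_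
    have : T r w ∈ (T r).toLinearMap '' K₀ := ⟨w, hw, rfl⟩
    rw [hK₀, LinearMap.image_convexHull] at this
    refine convexHull_mono ?_ this
    rintro _ ⟨_, ⟨s, rfl⟩, rfl⟩
    exact ⟨s + r, (hTT r s).symm⟩
  obtain ⟨v, hvK, hv⟩ := exists_norm_eq_iInf_of_complete_convex hKne
    isClosed_closure.isComplete hKc 0
  rw [norm_eq_iInf_iff_real_inner_le_zero hKc hvK] at hv
  have hinv : ∀ r, T r v = v := by
    intro r
    have h1 := hv _ (hTK r v hvK)
    rw [zero_sub, inner_neg_left, inner_sub_right, real_inner_self_eq_norm_sq] at h1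
    have h2 := norm_sub_sq_real (T r v) v
    rw [(T r).norm_map, real_inner_comm] at h2
    have h3 : ‖T r v - v‖ ^ 2 ≤ 0 := by linarith
    have h4 : ‖T r v - v‖ = 0 := by
      have := norm_nonneg (T r v - v)
      nlinarith
    exact sub_eq_zero.1 (norm_eq_zero.1 h4)
  obtain ⟨c, hc⟩ : ∃ c : ℝ, (v : Config A d → ℝ) =ᵐ[μ] fun _ => c := by
    have hvm : Measurable (v : Config A d → ℝ) := (Lp.stronglyMeasurable v).measurable
    refine hμ.ae_eq_const hvm fun r => ?_
    have := hTcoe r v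
    rw [hinv r] at this
    exact this.symm
  set P : Set (Lp ℝ 2 μ) := {G | ∃ g : Config A d → ℝ, Measurable g ∧ (∃ B', ∀ x, |g x| ≤ B') ∧
    SameAverages f g ∧ ∫ x, g x ∂μ = ∫ x, f x ∂μ ∧ (G : Config A d → ℝ) =ᵐ[μ] g} with hP
  have hint : ∀ g : Config A d → ℝ, Measurable g → (∃ B', ∀ x, |g x| ≤ B') → Integrable g μ :=
    fun g hg ⟨B', hB'⟩ => Integrable.of_bound hg.aestronglyMeasurable B' (ae_of_all _ hB')
  have hKP : K₀ ⊆ P := by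
    refine convexHull_min ?_ ?_
    · rintro _ ⟨r, rfl⟩
      refine ⟨fun x => f (shift r x), hf.comp (measurable_shift r), ⟨B, fun x => hB _⟩,
        sameAverages_comp_shift hB r, ?_, ?_⟩
      · have hf' : AEStronglyMeasurable f (μ.map (shift r)) := hf.aestronglyMeasurable
        rw [← integral_map (measurable_shift r).aemeasurable hf', hμ.1 r]
      · refine (hTcoe r F).trans ?_
        exact (hμ.1.measurePreserving r).quasiMeasurePreserving.ae_eq_comp hfL.coeFn_toLp
    · rintro G₁ ⟨g₁, hm₁, ⟨B₁, hB₁⟩, hs₁, hi₁, he₁⟩ G₂ ⟨g₂, hm₂, ⟨B₂, hB₂⟩, hs₂, hi₂, he₂⟩ a b ha hb hab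
      refine ⟨fun x => a * g₁ x + b * g₂ x, (hm₁.const_mul a).add (hm₂.const_mul b),
        ⟨a * B₁ + b * B₂, fun x => ?_⟩, hs₁.convex_comb hs₂ ha hb hab, ?_, ?_⟩
      · refine (abs_add_le _ _).trans ?_
        rw [abs_mul, abs_mul, abs_of_nonneg ha, abs_of_nonneg hb]
        gcongr
        · exact hB₁ x
        · exact hB₂ x
      · rw [integral_add ((hint g₁ hm₁ ⟨B₁, hB₁⟩).const_mul a) ((hint g₂ hm₂ ⟨B₂, hB₂⟩).const_mul b),
          integral_const_mul, integral_const_mul, hi₁, hi₂, ← add_mul, hab, one_mul]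
      · filter_upwards [Lp.coeFn_add (a • G₁) (b • G₂), Lp.coeFn_smul a G₁, Lp.coeFn_smul b G₂,
          he₁, he₂] with x h1 h2 h3 h4 h5
        rw [h1, Pi.add_apply, h2, h3, Pi.smul_apply, Pi.smul_apply, h4, h5, smul_eq_mul, smul_eq_mul]
  have happrox : ∀ η > 0, ∃ g : Config A d → ℝ, Measurable g ∧ (∃ B', ∀ x, |g x| ≤ B') ∧
      SameAverages f g ∧ ∫ x, g x ∂μ = ∫ x, f x ∂μ ∧ ∫ x, |g x - c| ∂μ ≤ η := by
    intro η hη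
    obtain ⟨G, hGK, hG⟩ := Metric.mem_closure_iff.1 hvK η hη
    obtain ⟨g, hm, hb, hs, hi, he⟩ := hKP hGK
    refine ⟨g, hm, hb, hs, hi, ?_⟩
    rw [dist_eq_norm, Lp.norm_def] at hG
    have h1 : (fun x => g x - c) =ᵐ[μ] -(v - G : Lp ℝ 2 μ) := by
      filter_upwards [Lp.coeFn_sub v G, hc, he] with x h1 h2 h3
      rw [Pi.neg_apply, h1, Pi.sub_apply, h2, h3]; ring
    have h2 : eLpNorm (fun x => g x - c) 1 μ ≤ eLpNorm (v - G : Lp ℝ 2 μ) 2 μ := by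
      rw [eLpNorm_congr_ae h1, eLpNorm_neg]
      exact eLpNorm_le_eLpNorm_of_exponent_le (by norm_num) (Lp.aestronglyMeasurable _)
    have h3 : ∫ x, |g x - c| ∂μ = (eLpNorm (fun x => g x - c) 1 μ).toReal := by
      simp only [← Real.norm_eq_abs]
      rw [integral_norm_eq_lintegral_enorm (hm.sub_const c).aestronglyMeasurable,
        eLpNorm_one_eq_lintegral_enorm]
    rw [h3]
    exact (ENNReal.toReal_mono (Lp.eLpNorm_ne_top _) h2).trans hG.le
  have hcf : c = ∫ x, f x ∂μ := by
    refine eq_of_abs_sub_le_all fun η hη => ?_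
    obtain ⟨g, hm, hb, -, hi, hg⟩ := happrox η hη
    have : c - ∫ x, f x ∂μ = -∫ x, (g x - c) ∂μ := by
      rw [integral_sub (hint g hm hb) (integrable_const c), hi]
      simp
    rw [this, abs_neg]
    exact (abs_integral_le_integral_abs).trans hg
  obtain ⟨g, hm, hb, hs, -, hg⟩ := happrox ε hε
  exact ⟨g, hm, hb, hs, hcf ▸ hg⟩

theorem ErgodicShift.ae_eventually_shiftSum_le {μ : Measure (Config A d)}
    [IsProbabilityMeasure μ] (hμ : ErgodicShift μ) {f : Config A d → ℝ} (hf : Measurable f)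
    {B : ℝ} (hB : ∀ x, |f x| ≤ B) {t : ℝ} (ht : 0 < t) :
    ∀ᵐ x ∂μ, ∀ᶠ n : ℕ in atTop, shiftSum f n x ≤ (∫ y, f y ∂μ + t) * (n : ℝ) ^ d := by
  set bad := {x | ¬ ∀ᶠ n : ℕ in atTop, shiftSum f n x ≤ (∫ y, f y ∂μ + t) * (n : ℝ) ^ d}
    with hbad
  have key : ∀ η > 0, μ.real bad ≤ 0 + η := by
    intro η hη
    obtain ⟨g, hm, ⟨B', hB'⟩, hs, hg⟩ := hμ.exists_sameAverages_integral_abs_sub_le hf hB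
      (show 0 < η * (t / 2) / 3 ^ d by positivity)
    set c := ∫ y, f y ∂μ
    have hi : Integrable (fun x => |g x - c|) μ :=
      ((Integrable.of_bound hm.aestronglyMeasurable B' (ae_of_all _ hB')).sub
        (integrable_const c)).abs
    have hmax := measure_exists_lt_shiftSum_le hμ.1 (hm.sub_const c).abs hi
      (fun x => abs_nonneg _) (half_pos ht)
    refine (measureReal_mono ?_).trans (hmax.trans ?_)
    · intro x hx
      by_contra hx'
      simp only [Set.mem_ofPred_eq, not_exists, not_and, not_lt] at hx'
      refine hx ?_
      filter_upwards [hs (t / 2) (half_pos ht), eventually_ge_atTop 1] with n hn h1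
      have h2 := (abs_le.1 (hn x)).1
      have h3 := hx' n h1
      have h4 : shiftSum g n x ≤ c * (n : ℝ) ^ d + shiftSum (fun x => |g x - c|) n x := by
        have : c * (n : ℝ) ^ d = ∑ i ∈ box d n, c := by
          rw [Finset.sum_const, card_box, nsmul_eq_mul, mul_comm]; simp
        rw [this]
        unfold shiftSum
        rw [← Finset.sum_add_distrib]
        refine Finset.sum_le_sum fun i _ => ?_
        linarith [le_abs_self (g (shift i x) - c)]
      linarith
    · rw [zero_add, div_le_iff₀ (half_pos ht)]
      calc 3 ^ d * ∫ x, |g x - c| ∂μ ≤ 3 ^ d * (η * (t / 2) / 3 ^ d) := by gcongr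
        _ = η * (t / 2) := by field_simp
  have h0 : μ.real bad = 0 := le_antisymm (le_of_forall_pos_le_add key) measureReal_nonneg
  rw [ae_iff]
  exact (measureReal_eq_zero_iff).1 h0

/-! ### Grids of blocks inside a cube -/

/-- The corner of the block with index `r` in the `p`-shifted regular `m`-grid. -/
def corner (m : ℕ) (p r : Site d) : Site d := fun j => m * r j + p j

/-- The indices of the blocks of the `p`-shifted regular `m`-grid that lie inside `Λ_k`. -/
def grid (m k : ℕ) (p : Site d) : Finset (Site d) :=
  (box d (k / m)).filter fun r => ∀ j, m * r j + p j + m ≤ k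

theorem mem_grid {m k : ℕ} (hm : 0 < m) {p r : Site d} :
    r ∈ grid m k p ↔ ∀ j, m * r j + p j + m ≤ k := by
  simp only [grid, Finset.mem_filter, mem_box, and_iff_right_iff_imp]
  intro h j
  have := h j
  rw [Nat.lt_iff_add_one_le, Nat.le_div_iff_mul_le hm]
  linarith [mul_comm (r j) m]

theorem card_grid_le (m k : ℕ) (p : Site d) : (grid m k p).card ≤ (k / m) ^ d :=
  (Finset.card_filter_le _ _).trans (card_box _).le

theorem sum_sum_grid {m : ℕ} (hm : 0 < m) (k : ℕ) (g : Site d → ℝ) :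
    ∑ p ∈ box d m, ∑ r ∈ grid m k p, g (corner m p r) = ∑ i ∈ box d (k + 1 - m), g i := by
  rw [Finset.sum_sigma']
  refine Finset.sum_nbij' (fun a => corner m a.1 a.2)
    (fun i => ⟨fun j => i j % m, fun j => i j / m⟩) ?_ ?_ ?_ ?_ ?_
  · rintro ⟨p, r⟩ h
    rw [Finset.mem_sigma] at h
    have := (mem_grid hm).1 h.2
    refine mem_box.2 fun j => ?_
    have := this j
    simp only [corner] at *
    omega
  · intro i hi
    rw [Finset.mem_sigma]
    refine ⟨mem_box.2 fun j => Nat.mod_lt _ hm, (mem_grid hm).2 fun j => ?_⟩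
    have := mem_box.1 hi j
    have := Nat.div_add_mod (i j) m
    simp only at *
    omega
  · rintro ⟨p, r⟩ h
    rw [Finset.mem_sigma] at h
    have hp := mem_box.1 h.1
    simp only [corner, Nat.mul_add_mod_self_left, Nat.mul_add_div hm]
    have h1 : (fun j => p j % m) = p := funext fun j => Nat.mod_eq_of_lt (hp j)
    have h2 : (fun j => r j + p j / m) = r := funext fun j => by
      rw [Nat.div_eq_of_lt (hp j), add_zero]
    rw [h1, h2]
  · intro i hi
    funext j
    exact Nat.div_add_mod (i j) m
  · intros; rfl

/-- The sites of `Λ_k` lying in one of the blocks with index in `R`. -/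
def Covered (m : ℕ) (p : Site d) (R : Finset (Site d)) {k : ℕ} (i : Fin d → Fin k) : Prop :=
  ∃ r ∈ R, ∀ j, corner m p r j ≤ i j ∧ (i j : ℕ) < corner m p r j + m

open Classical in
theorem card_not_covered_add_le {m k : ℕ} (hm : 0 < m) {p : Site d} {R : Finset (Site d)}
    (hR : R ⊆ grid m k p) :
    Fintype.card {i : Fin d → Fin k // ¬ Covered m p R i} + R.card * m ^ d ≤ k ^ d := by
  have hbd : ∀ r ∈ R, ∀ j, m * r j + p j + m ≤ k := fun r hr => (mem_grid hm).1 (hR hr)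
  have h1 : R.card * m ^ d ≤ Fintype.card {i : Fin d → Fin k // Covered m p R i} := by
    have : Fintype.card (R × (Fin d → Fin m)) = R.card * m ^ d := by simp
    rw [← this]
    refine Fintype.card_le_of_injective
      (fun a => ⟨fun j => ⟨corner m p a.1 j + a.2 j, ?_⟩, a.1, a.1.2, fun j => ?_⟩) ?_
    · have := hbd a.1 a.1.2 j
      have := (a.2 j).2
      simp only [corner]
      omega
    · have := (a.2 j).2
      simp only
      omega
    · rintro ⟨⟨r, hr⟩, a⟩ ⟨⟨r', hr'⟩, a'⟩ h
      simp only [Subtype.mk.injEq, funext_iff, Fin.mk.injEq, corner] at h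
      have hrr : r = r' := funext fun j => by
        have h1 : m * r j + a j = m * r' j + a' j := by have := h j; omega
        have h2 := congrArg (· / m) h1
        simpa [Nat.mul_add_div hm, Nat.div_eq_of_lt (a j).2, Nat.div_eq_of_lt (a' j).2] using h2
      subst hrr
      have haa : a = a' := funext fun j => Fin.ext (by have := h j; omega)
      rw [haa]
  have h2 := Fintype.card_subtype_compl (fun i : Fin d → Fin k => Covered m p R i)
  have h3 := Fintype.card_subtype_le (fun i : Fin d → Fin k => Covered m p R i)
  have h4 : Fintype.card (Fin d → Fin k) = k ^ d := by simp
  omega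

theorem sum_prod_subw_le [NeZero A] {m k : ℕ} (hm : 0 < m) {p : Site d} {R : Finset (Site d)}
    (hR : R ⊆ grid m k p) {ψ : Word A d m → ℝ} (hψ : ∀ u, 0 ≤ ψ u) :
    ∑ w : Word A d k, ∏ r ∈ R, ψ (subw w m (corner m p r)) ≤
      (∑ u, ψ u) ^ R.card * (A : ℝ) ^ (k ^ d - R.card * m ^ d) := by
  classical
  have hbd : ∀ r ∈ R, ∀ j, m * r j + p j + m ≤ k := fun r hr => (mem_grid hm).1 (hR hr)
  set U := {i : Fin d → Fin k // ¬ Covered m p R i}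
  set enc : Word A d k → (R → Word A d m) × (U → Fin A) := fun w =>
    (fun r => subw w m (corner m p r), fun i => w i) with henc
  have hinj : Function.Injective enc := by
    intro w w' hw
    rw [Prod.ext_iff] at hw
    funext i
    by_cases hi : Covered m p R i
    · obtain ⟨r, hr, hri⟩ := hi
      have h1 := congrFun (congrFun hw.1 ⟨r, hr⟩)
        (fun j => ⟨i j - corner m p r j, by have := hri j; omega⟩)
      have h2 : ∀ j, corner m p r j + ((i j : ℕ) - corner m p r j) = i j := fun j => by
        have := hri j; omega
      simpa only [henc, subw, h2, Fin.is_lt, implies_true, dite_true, Fin.eta] using h1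
    · exact congrFun hw.2 ⟨i, hi⟩
  calc ∑ w : Word A d k, ∏ r ∈ R, ψ (subw w m (corner m p r))
      = ∑ w : Word A d k, ∏ r : R, ψ ((enc w).1 r) := by
        refine Finset.sum_congr rfl fun w _ => ?_
        rw [← Finset.prod_coe_sort]
    _ = ∑ a ∈ Finset.univ.map ⟨enc, hinj⟩, ∏ r : R, ψ (a.1 r) := by
        rw [Finset.sum_map]; rfl
    _ ≤ ∑ a : (R → Word A d m) × (U → Fin A), ∏ r : R, ψ (a.1 r) :=
        Finset.sum_le_sum_of_subset_of_nonneg (Finset.subset_univ _) fun _ _ _ =>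
          Finset.prod_nonneg fun _ _ => hψ _
    _ = (∑ u, ψ u) ^ R.card * (A : ℝ) ^ Fintype.card U := by
        rw [Fintype.sum_prod_type]
        simp only [Finset.sum_const, Finset.card_univ, Fintype.card_fun, Fintype.card_fin,
          nsmul_eq_mul, Nat.cast_pow]
        rw [← Finset.mul_sum, mul_comm]
        congr 1
        have := Finset.prod_univ_sum (fun _ : R => (Finset.univ : Finset (Word A d m)))
          (fun _ u => ψ u)
        rw [Fintype.piFinset_univ] at this
        rw [← this]
        simp
    _ ≤ _ := by
        have h1 := card_not_covered_add_le hm hR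
        have hA : (1 : ℝ) ≤ A := by exact_mod_cast NeZero.one_le
        have hs : 0 ≤ ∑ u, ψ u := Finset.sum_nonneg fun u _ => hψ u
        gcongr
        refine (Fintype.card_congr (Equiv.refl _)).trans_le (Nat.le_sub_of_add_le h1)

section Marginals

/-! ### Block marginals -/

theorem measurable_wordAt (k : ℕ) (c : Site d) :
    Measurable fun x : Config A d => wordAt x k c :=
  measurable_pi_lambda _ fun _ => measurable_pi_apply _

theorem wordAt_eq_shift (x : Config A d) (k : ℕ) (c : Site d) :
    wordAt x k c = wordAt (shift c x) k 0 := by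
  funext i
  simp only [wordAt, shift]
  congr 1
  funext j
  simp [add_comm]

theorem subw_wordAt [NeZero A] (x : Config A d) {m k : ℕ} (c s : Site d)
    (hs : ∀ j, s j + m ≤ k) : subw (wordAt x k c) m s = wordAt x m (c + s) := by
  funext i
  have h : ∀ j, s j + (i j : ℕ) < k := fun j => by
    have := hs j
    have := (i j).2
    omega
  simp only [subw, wordAt, h, implies_true, dite_true, Pi.add_apply, add_assoc]

theorem wordDist_nonneg {μ : Measure (Config A d)} (k : ℕ) (w : Word A d k) :
    0 ≤ wordDist μ k w := ENNReal.toReal_nonneg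

variable {μ : Measure (Config A d)} [IsProbabilityMeasure μ]

theorem integral_comp_wordAt (k : ℕ) (g : Word A d k → ℝ) :
    ∫ x, g (wordAt x k 0) ∂μ = ∑ w, wordDist μ k w * g w := by
  have hm := measurable_wordAt (A := A) k (0 : Site d)
  have : IsProbabilityMeasure (μ.map fun x => wordAt x k 0) :=
    Measure.isProbabilityMeasure_map hm.aemeasurable
  rw [← integral_map (φ := fun x => wordAt x k 0) (f := g) hm.aemeasurable
    (measurable_of_countable g).aestronglyMeasurable, integral_fintype .of_finite]
  refine Finset.sum_congr rfl fun w _ => ?_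
  rw [measureReal_def, Measure.map_apply hm (measurableSet_singleton w), smul_eq_mul]
  rfl

theorem sum_wordDist (k : ℕ) : ∑ w, wordDist μ k w = 1 := by
  have := integral_comp_wordAt (μ := μ) k fun _ => 1
  simpa using this.symm

theorem wordDist_le_one (k : ℕ) (w : Word A d k) : wordDist μ k w ≤ 1 :=
  ENNReal.toReal_le_of_le_ofReal zero_le_one (by simpa using prob_le_one)

open Classical in
theorem measureReal_wordAt_mem (k : ℕ) (S : Set (Word A d k)) :
    μ.real {x | wordAt x k 0 ∈ S} = ∑ w, if w ∈ S then wordDist μ k w else 0 := by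
  have h := integral_comp_wordAt (μ := μ) k (S.indicator 1)
  have hS : MeasurableSet {x : Config A d | wordAt x k 0 ∈ S} :=
    measurable_wordAt k 0 S.to_countable.measurableSet
  rw [← integral_indicator_one hS]
  refine Eq.trans ?_ (h.trans ?_)
  · rfl
  · refine Finset.sum_congr rfl fun w _ => ?_
    by_cases hw : w ∈ S <;> simp [hw]

theorem ae_wordDist_pos (hμ : Stationary μ) (k : ℕ) :
    ∀ᵐ x ∂μ, ∀ i : Site d, 0 < wordDist μ k (wordAt x k i) := by
  have h0 : ∀ᵐ x ∂μ, 0 < wordDist μ k (wordAt x k 0) := by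
    rw [ae_iff]
    have := measureReal_wordAt_mem (μ := μ) k {w | ¬ 0 < wordDist μ k w}
    rw [Finset.sum_eq_zero] at this
    · exact (measureReal_eq_zero_iff).1 this
    · intro w _
      split_ifs with hw
      · exact le_antisymm (not_lt.1 hw) (wordDist_nonneg k w)
      · rfl
  refine ae_all_iff.2 fun i => ?_
  have := (hμ.measurePreserving i).quasiMeasurePreserving.ae h0
  filter_upwards [this] with x hx
  rwa [wordAt_eq_shift]

/-! ### The cardinality of the typical sampling set -/

open Classical in
theorem ncard_typicalBlocks [NeZero A] {k m : ℕ} (hm : 0 < m) (S : Set (Word A d m))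
    (w : Word A d k) (p : Site d) :
    Set.ncard {r : Site d | (∀ j, m * r j + p j + m ≤ k) ∧
      subw w m (fun j => m * r j + p j) ∈ S} =
      ((grid m k p).filter fun r => subw w m (corner m p r) ∈ S).card := by
  rw [← Set.ncard_coe_finset]
  congr 1
  ext r
  rw [Finset.mem_coe, Finset.mem_filter, mem_grid hm]
  rfl

theorem card_entropyTypical_le [NeZero A] (h δ : ℝ) (m : ℕ) :
    ∑ u, (entropyTypical μ h δ m).indicator (1 : Word A d m → ℝ) u ≤
      (A : ℝ) ^ ((m : ℝ) ^ d * (h + δ)) := by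
  have hA : (0 : ℝ) < A := by exact_mod_cast NeZero.pos A
  set a : ℝ := (m : ℝ) ^ d * (h + δ)
  have h1 : ∑ u, (A : ℝ) ^ (-a) * (entropyTypical μ h δ m).indicator (1 : Word A d m → ℝ) u ≤
      1 := by
    rw [← sum_wordDist (μ := μ) m]
    refine Finset.sum_le_sum fun u _ => ?_
    by_cases hu : u ∈ entropyTypical μ h δ m
    · rw [Set.indicator_of_mem hu, Pi.one_apply, mul_one]
      exact hu.1
    · rw [Set.indicator_of_notMem hu, mul_zero]
      exact wordDist_nonneg m u
  rw [← Finset.mul_sum, Real.rpow_neg hA.le, inv_mul_le_iff₀ (by positivity), mul_one] at h1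
  exact h1

theorem ncard_samplingTypical_le [NeZero A] (hA : 2 ≤ A) {m k : ℕ} (hm : 0 < m) {h δ : ℝ}
    (hh : 0 ≤ h) (hδ1 : δ ≤ 1) :
    (Set.ncard (samplingTypical μ h δ m k) : ℝ) ≤
      (A : ℝ) ^ ((m : ℝ) ^ d + ((k / m : ℕ) : ℝ) ^ d + (k : ℝ) ^ d * (h + 2 * δ - δ ^ 2)) := by
  classical
  have hA2 : (2 : ℝ) ≤ A := by exact_mod_cast hA
  have hA0 : (0 : ℝ) < A := by linarith
  set ψ := (entropyTypical μ h δ m).indicator (1 : Word A d m → ℝ) with hψ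
  have hψ0 : ∀ u, 0 ≤ ψ u := fun u => Set.indicator_nonneg (fun _ _ => zero_le_one) u
  set T := samplingTypical μ h δ m k with hT
  set L : Site d → Finset (Finset (Site d)) := fun p => (grid m k p).powerset.filter fun R =>
    (1 - δ) * ((k : ℝ) / (m : ℝ)) ^ d ≤ R.card with hL
  have hpR : ∀ p, ∀ R ∈ L p, ∑ w : Word A d k, ∏ r ∈ R, ψ (subw w m (corner m p r)) ≤
      (A : ℝ) ^ ((k : ℝ) ^ d * (h + 2 * δ - δ ^ 2)) := by
    intro p R hR
    obtain ⟨hR, hc⟩ := Finset.mem_filter.1 hR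
    rw [Finset.mem_powerset] at hR
    have hle : R.card * m ^ d ≤ k ^ d := (Nat.le_add_left _ _).trans (card_not_covered_add_le hm hR)
    refine (sum_prod_subw_le hm hR hψ0).trans ?_
    have h1 : (A : ℝ) ^ (k ^ d - R.card * m ^ d) =
        (A : ℝ) ^ ((k : ℝ) ^ d - R.card * (m : ℝ) ^ d) := by
      rw [← Real.rpow_natCast, Nat.cast_sub hle]
      push_cast
      rfl
    have h2 : (∑ u, ψ u) ^ R.card ≤ (A : ℝ) ^ ((m : ℝ) ^ d * (h + δ) * R.card) := by
      rw [Real.rpow_mul hA0.le, Real.rpow_natCast]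
      exact pow_le_pow_left₀ (Finset.sum_nonneg fun u _ => hψ0 u) (card_entropyTypical_le h δ m) _
    rw [h1]
    refine (mul_le_mul_of_nonneg_right h2 (by positivity)).trans ?_
    rw [← Real.rpow_add hA0]
    refine Real.rpow_le_rpow_of_exponent_le (by linarith) ?_
    have hmd : (0 : ℝ) < (m : ℝ) ^ d := by positivity
    rw [div_pow, mul_div_assoc', div_le_iff₀ hmd] at hc
    have hle' : (R.card : ℝ) * (m : ℝ) ^ d ≤ (k : ℝ) ^ d := by exact_mod_cast hle
    nlinarith [mul_nonneg (sub_nonneg.2 hle') hh,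
      mul_nonneg (sub_nonneg.2 hc) (sub_nonneg.2 hδ1)]
  have hLc : ∀ p, ((L p).card : ℝ) ≤ (A : ℝ) ^ (((k / m : ℕ) : ℝ) ^ d) := by
    intro p
    have h1 : (L p).card ≤ 2 ^ (k / m) ^ d := by
      refine (Finset.card_filter_le _ _).trans ?_
      rw [Finset.card_powerset]
      exact Nat.pow_le_pow_right two_pos (card_grid_le m k p)
    calc ((L p).card : ℝ) ≤ (2 : ℝ) ^ (k / m) ^ d := by exact_mod_cast h1
      _ ≤ (A : ℝ) ^ (k / m) ^ d := by gcongr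
      _ = _ := by rw [← Real.rpow_natCast]; push_cast; rfl
  have hmA : ((m ^ d : ℕ) : ℝ) ≤ (A : ℝ) ^ ((m : ℝ) ^ d) := by
    have : m ^ d ≤ A ^ m ^ d := (Nat.lt_pow_self (by omega)).le
    calc ((m ^ d : ℕ) : ℝ) ≤ (A : ℝ) ^ m ^ d := by exact_mod_cast this
      _ = _ := by rw [← Real.rpow_natCast]; push_cast; rfl
  have hpt : ∀ w : Word A d k, T.indicator (1 : Word A d k → ℝ) w ≤
      ∑ p ∈ box d m, ∑ R ∈ L p, ∏ r ∈ R, ψ (subw w m (corner m p r)) := by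
    intro w
    have hnn : ∀ p, ∀ R ∈ L p, 0 ≤ ∏ r ∈ R, ψ (subw w m (corner m p r)) := fun p R _ =>
      Finset.prod_nonneg fun _ _ => hψ0 _
    by_cases hw : w ∈ T
    · rw [Set.indicator_of_mem hw]
      obtain ⟨p, hp, hc⟩ := hw
      rw [ncard_typicalBlocks hm] at hc
      set R := (grid m k p).filter fun r => subw w m (corner m p r) ∈ entropyTypical μ h δ m
      have hRL : R ∈ L p :=
        Finset.mem_filter.2 ⟨Finset.mem_powerset.2 (Finset.filter_subset _ _), hc⟩
      have h1 : ∏ r ∈ R, ψ (subw w m (corner m p r)) = 1 :=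
        Finset.prod_eq_one fun r hr => Set.indicator_of_mem (Finset.mem_filter.1 hr).2 _
      refine le_trans ?_ (Finset.single_le_sum (fun p _ => Finset.sum_nonneg (hnn p))
        (mem_box.2 hp))
      exact h1.symm.le.trans (Finset.single_le_sum (hnn p) hRL)
    · rw [Set.indicator_of_notMem hw]
      exact Finset.sum_nonneg fun p _ => Finset.sum_nonneg (hnn p)
  have hcard : (Set.ncard T : ℝ) = ∑ w, T.indicator (1 : Word A d k → ℝ) w := by
    rw [Set.ncard_eq_toFinset_card']
    simp only [Set.indicator_apply, Pi.one_apply, Finset.sum_boole]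
    congr 2
    ext w
    simp
  calc (Set.ncard T : ℝ) = ∑ w, T.indicator (1 : Word A d k → ℝ) w := hcard
    _ ≤ ∑ w : Word A d k, ∑ p ∈ box d m, ∑ R ∈ L p, ∏ r ∈ R, ψ (subw w m (corner m p r)) :=
        Finset.sum_le_sum fun w _ => hpt w
    _ = ∑ p ∈ box d m, ∑ R ∈ L p, ∑ w : Word A d k, ∏ r ∈ R, ψ (subw w m (corner m p r)) := by
        rw [Finset.sum_comm]
        exact Finset.sum_congr rfl fun p _ => Finset.sum_comm
    _ ≤ ∑ p ∈ box d m, ∑ R ∈ L p, (A : ℝ) ^ ((k : ℝ) ^ d * (h + 2 * δ - δ ^ 2)) :=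
        Finset.sum_le_sum fun p _ => Finset.sum_le_sum (hpR p)
    _ ≤ ∑ p ∈ box d m, (A : ℝ) ^ (((k / m : ℕ) : ℝ) ^ d) *
          (A : ℝ) ^ ((k : ℝ) ^ d * (h + 2 * δ - δ ^ 2)) := by
        refine Finset.sum_le_sum fun p _ => ?_
        rw [Finset.sum_const, nsmul_eq_mul]
        gcongr
        exact hLc p
    _ = ((m ^ d : ℕ) : ℝ) * ((A : ℝ) ^ (((k / m : ℕ) : ℝ) ^ d) *
          (A : ℝ) ^ ((k : ℝ) ^ d * (h + 2 * δ - δ ^ 2))) := by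
        rw [Finset.sum_const, nsmul_eq_mul, card_box]
    _ ≤ (A : ℝ) ^ ((m : ℝ) ^ d) * ((A : ℝ) ^ (((k / m : ℕ) : ℝ) ^ d) *
          (A : ℝ) ^ ((k : ℝ) ^ d * (h + 2 * δ - δ ^ 2))) := by gcongr
    _ = _ := by rw [← Real.rpow_add hA0, ← Real.rpow_add hA0, add_assoc]

theorem entH_wordDist_nonneg [NeZero A] (hA : 2 ≤ A) (k : ℕ) : 0 ≤ entH A (wordDist μ k) := by
  rw [entH, ← Finset.sum_neg_distrib]
  refine Finset.sum_nonneg fun w _ => neg_nonneg.2 ?_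
  exact mul_nonpos_of_nonneg_of_nonpos (wordDist_nonneg k w) (Real.logb_nonpos
    (by exact_mod_cast hA) (wordDist_nonneg k w) (wordDist_le_one k w))

theorem HasEntropyRate.nonneg [NeZero A] (hA : 2 ≤ A) {h : ℝ} (hrate : HasEntropyRate μ h) :
    0 ≤ h :=
  ge_of_tendsto' hrate fun n => div_nonneg (entH_wordDist_nonneg hA n) (by positivity)

theorem eventually_logb_ncard_samplingTypical_le [NeZero A] (hA : 2 ≤ A) (hd : 1 ≤ d)
    {h : ℝ} (hh : 0 ≤ h) {δ : ℝ} (hδ0 : 0 < δ) (hδ1 : δ ≤ 1)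
    {m : ℕ → ℕ} (hm1 : Tendsto m atTop atTop)
    (hm2 : Tendsto (fun k : ℕ => (m k : ℝ) / (k : ℝ)) atTop (𝓝 0)) :
    ∀ᶠ k : ℕ in atTop,
      Real.logb A (Set.ncard (samplingTypical μ h δ (m k) k)) / (k : ℝ) ^ d ≤ h + 2 * δ := by
  have hd0 : d ≠ 0 := by omega
  have hA1 : (1 : ℝ) < A := by exact_mod_cast hA
  have h1 : Tendsto (fun k : ℕ => ((m k : ℝ) / k) ^ d) atTop (𝓝 0) := by
    simpa [hd0] using hm2.pow d
  have h2 : Tendsto (fun k : ℕ => (1 / (m k : ℝ)) ^ d) atTop (𝓝 0) := by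
    simpa [hd0] using ((tendsto_one_div_atTop_nhds_zero_nat (𝕜 := ℝ)).comp hm1).pow d
  have h3 := h1.add h2
  rw [add_zero] at h3
  filter_upwards [h3.eventually (gt_mem_nhds (show 0 < δ ^ 2 by positivity)),
    hm1.eventually_gt_atTop 0, eventually_gt_atTop 0] with k hk hm hk0
  have hkd : (0 : ℝ) < (k : ℝ) ^ d := by positivity
  rw [div_le_iff₀ hkd]
  rcases Nat.eq_zero_or_pos (Set.ncard (samplingTypical μ h δ (m k) k)) with h0 | h0
  · rw [h0]
    simp only [Nat.cast_zero, Real.logb_zero]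
    positivity
  · have h4 := ncard_samplingTypical_le (μ := μ) hA hm hh hδ1 (k := k)
    rw [← Real.logb_le_iff_le_rpow hA1 (by exact_mod_cast h0)] at h4
    refine h4.trans ?_
    have h5 : ((k / m k : ℕ) : ℝ) ^ d ≤ (k : ℝ) ^ d * (1 / (m k : ℝ)) ^ d := by
      rw [← mul_pow, mul_one_div]
      gcongr
      exact Nat.cast_div_le
    have h6 : (m k : ℝ) ^ d = (k : ℝ) ^ d * ((m k : ℝ) / k) ^ d := by
      rw [← mul_pow, mul_div_cancel₀ _ (by positivity)]
    rw [h6]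
    nlinarith

/-! ### The Shannon–McMillan theorem -/

/-- The information function `x ↦ -log μ^k(x(Λ_k))`. -/
noncomputable def information (μ : Measure (Config A d)) (k : ℕ) (x : Config A d) : ℝ :=
  -Real.logb A (wordDist μ k (wordAt x k 0))

theorem measurable_information (μ : Measure (Config A d)) (k : ℕ) :
    Measurable (information μ k) :=
  (measurable_of_countable fun w : Word A d k => -Real.logb A (wordDist μ k w)).comp
    (measurable_wordAt k 0)

theorem information_nonneg [NeZero A] (hA : 2 ≤ A) (k : ℕ) (x : Config A d) :
    0 ≤ information μ k x :=
  neg_nonneg.2 (Real.logb_nonpos (by exact_mod_cast hA) (wordDist_nonneg k _)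
    (wordDist_le_one k _))

theorem exists_abs_information_le (μ : Measure (Config A d)) (k : ℕ) :
    ∃ B, ∀ x, |information μ k x| ≤ B := by
  obtain ⟨B, hB⟩ := (Set.finite_range fun w : Word A d k =>
    |-Real.logb A (wordDist μ k w)|).bddAbove
  exact ⟨B, fun x => hB ⟨wordAt x k 0, rfl⟩⟩

theorem integral_information (k : ℕ) : ∫ x, information μ k x ∂μ = entH A (wordDist μ k) := by
  unfold information
  rw [integral_comp_wordAt k fun w => -Real.logb A (wordDist μ k w), entH]
  simp

/-- The unnormalised mixture, over the offsets `p ∈ Λ_k`, of the product measures built from the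
marginal `μ^k` on the `p`-shifted regular `k`-grid. -/
noncomputable def gridMixture [NeZero A] (μ : Measure (Config A d)) (k m : ℕ) (w : Word A d m) :
    ℝ :=
  ∑ p ∈ box d k, (∏ r ∈ grid k m p, wordDist μ k (subw w k (corner k p r))) *
    (A : ℝ) ^ (-((m : ℝ) ^ d - (grid k m p).card * (k : ℝ) ^ d))

theorem sum_gridMixture_le [NeZero A] {k : ℕ} (hk : 0 < k) (m : ℕ) :
    ∑ w, gridMixture μ k m w ≤ (k : ℝ) ^ d := by
  have hA : (0 : ℝ) < A := by exact_mod_cast NeZero.pos A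
  unfold gridMixture
  rw [Finset.sum_comm]
  refine (Finset.sum_le_sum (g := fun _ => (1 : ℝ)) fun p _ => ?_).trans (by simp [card_box])
  have hle : (grid k m p).card * k ^ d ≤ m ^ d :=
    (Nat.le_add_left _ _).trans (card_not_covered_add_le hk subset_rfl)
  have h1 := sum_prod_subw_le (A := A) hk (subset_refl (grid k m p)) (wordDist_nonneg (μ := μ) k)
  rw [sum_wordDist, one_pow, one_mul, ← Real.rpow_natCast, Nat.cast_sub hle] at h1
  push_cast at h1
  rw [← Finset.sum_mul, Real.rpow_neg hA.le]
  exact mul_inv_le_one_of_le₀ h1 (by positivity)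

theorem exists_rpow_le_gridMixture [NeZero A] (hA : 2 ≤ A) {k : ℕ} (hk : 0 < k) (m : ℕ)
    {x : Config A d} (hx : ∀ i : Site d, 0 < wordDist μ k (wordAt x k i)) :
    (A : ℝ) ^ (-(shiftSum (information μ k) m x / (k : ℝ) ^ d +
      ((m : ℝ) ^ d - ((m - (k - 1) : ℕ) : ℝ) ^ d))) ≤ gridMixture μ k m (wordAt x m 0) := by
  have hA1 : (1 : ℝ) < A := by exact_mod_cast hA
  have hA0 : (0 : ℝ) < A := by linarith
  have hkd : (0 : ℝ) < (k : ℝ) ^ d := by positivity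
  set S := shiftSum (information μ k) m x
  set F : Site d → ℝ := fun i => information μ k (shift i x) with hF
  set L : Site d → ℝ := fun p => ∑ r ∈ grid k m p, F (corner k p r) +
    ((m : ℝ) ^ d - (grid k m p).card * (k : ℝ) ^ d) with hL
  have hterm : ∀ p, (∏ r ∈ grid k m p, wordDist μ k (subw (wordAt x m 0) k (corner k p r))) *
      (A : ℝ) ^ (-((m : ℝ) ^ d - (grid k m p).card * (k : ℝ) ^ d)) = (A : ℝ) ^ (-L p) := by
    intro p
    have : ∏ r ∈ grid k m p, wordDist μ k (subw (wordAt x m 0) k (corner k p r)) =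
        (A : ℝ) ^ (∑ r ∈ grid k m p, -F (corner k p r)) := by
      rw [Real.rpow_sum_of_pos hA0]
      refine Finset.prod_congr rfl fun r hr => ?_
      rw [subw_wordAt x 0 (corner k p r) fun j => (mem_grid hk).1 hr j, zero_add, hF]
      simp only [information, neg_neg]
      rw [← wordAt_eq_shift, Real.rpow_logb hA0 hA1.ne' (hx _)]
    rw [this, ← Real.rpow_add hA0, hL, neg_add, Finset.sum_neg_distrib]
  have hsum : ∑ p ∈ box d k, L p ≤ ∑ p ∈ box d k, (S / (k : ℝ) ^ d +
      ((m : ℝ) ^ d - ((m - (k - 1) : ℕ) : ℝ) ^ d)) := by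
    have h1 := sum_sum_grid hk m F
    have h2 := sum_sum_grid (d := d) hk m fun _ => 1
    have hmk : m + 1 - k = m - (k - 1) := by omega
    simp only [Finset.sum_const, nsmul_eq_mul, mul_one, card_box, Nat.cast_pow, hmk] at h1 h2
    have h3 : ∑ i ∈ box d (m - (k - 1)), F i ≤ S :=
      Finset.sum_le_sum_of_subset_of_nonneg (box_mono (Nat.sub_le _ _)) fun i _ _ =>
        information_nonneg hA k _
    rw [hL, Finset.sum_add_distrib, h1, Finset.sum_sub_distrib, ← Finset.sum_mul, h2,
      Finset.sum_const, Finset.sum_const, card_box, nsmul_eq_mul, nsmul_eq_mul, Nat.cast_pow,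
      mul_add, mul_div_cancel₀ _ hkd.ne']
    linarith
  obtain ⟨p, hp, hLp⟩ := Finset.exists_le_of_sum_le (s := box d k)
    ⟨0, mem_box.2 fun _ => hk⟩ hsum
  refine (Real.rpow_le_rpow_of_exponent_le hA1.le (neg_le_neg hLp)).trans ?_
  rw [← hterm p]
  exact Finset.single_le_sum (f := fun p =>
    (∏ r ∈ grid k m p, wordDist μ k (subw (wordAt x m 0) k (corner k p r))) *
      (A : ℝ) ^ (-((m : ℝ) ^ d - (grid k m p).card * (k : ℝ) ^ d)))
    (fun p _ => mul_nonneg (Finset.prod_nonneg fun _ _ => wordDist_nonneg k _) (by positivity)) hp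

theorem tendsto_measureReal_compl_of_ae_eventually_mem {G : ℕ → Set (Config A d)}
    (hG : ∀ n, MeasurableSet (G n)) (h : ∀ᵐ x ∂μ, ∀ᶠ n in atTop, x ∈ G n) :
    Tendsto (fun n => μ.real (G n)ᶜ) atTop (𝓝 0) := by
  have := tendsto_measure_of_ae_tendsto_indicator_of_isFiniteMeasure atTop
    MeasurableSet.empty (μ := μ) (fun n => (hG n).compl) (by
      filter_upwards [h] with x hx
      filter_upwards [hx] with n hn
      simpa using hn)
  rw [measure_empty] at this
  have h' := (ENNReal.tendsto_toReal ENNReal.zero_ne_top).comp this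
  rw [ENNReal.toReal_zero] at h'
  exact h'

theorem tendsto_rpow_neg_mul_pow_zero [NeZero A] (hA : 2 ≤ A) (hd : 1 ≤ d) {a : ℝ} (ha : 0 < a) :
    Tendsto (fun m : ℕ => (A : ℝ) ^ (-(a * (m : ℝ) ^ d))) atTop (𝓝 0) := by
  have hA1 : (1 : ℝ) < A := by exact_mod_cast hA
  refine (tendsto_rpow_atBot_of_base_gt_one _ hA1).comp (tendsto_neg_atTop_atBot.comp ?_)
  exact ((tendsto_pow_atTop (by omega)).comp tendsto_natCast_atTop_atTop).const_mul_atTop ha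

theorem ErgodicShift.tendsto_measureReal_wordDist_lt [NeZero A] (hA : 2 ≤ A) (hd : 1 ≤ d)
    (hμ : ErgodicShift μ) {h : ℝ} (hrate : HasEntropyRate μ h) {ε : ℝ} (hε : 0 < ε) :
    Tendsto (fun m : ℕ => μ.real {x | wordAt x m 0 ∈
      {w | wordDist μ m w < (A : ℝ) ^ (-((m : ℝ) ^ d * (h + ε)))}}) atTop (𝓝 0) := by
  classical
  have hA1 : (1 : ℝ) < A := by exact_mod_cast hA
  have hA0 : (0 : ℝ) < A := by linarith
  have hε4 : 0 < ε / 4 := by positivity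
  obtain ⟨k, hkh, hk⟩ := ((hrate.eventually (gt_mem_nhds (show h < h + ε / 4 by linarith))).and
    (eventually_gt_atTop 0)).exists
  have hkd : (0 : ℝ) < (k : ℝ) ^ d := by positivity
  rw [div_lt_iff₀ hkd] at hkh
  obtain ⟨B, hB⟩ := exists_abs_information_le μ k
  set G : ℕ → Set (Config A d) := fun m => {x | shiftSum (information μ k) m x ≤
    (∫ y, information μ k y ∂μ + ε / 4 * (k : ℝ) ^ d) * (m : ℝ) ^ d} with hG
  have hGt := tendsto_measureReal_compl_of_ae_eventually_mem (μ := μ) (G := G)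
    (fun m => measurableSet_le (measurable_shiftSum (measurable_information μ k) m) measurable_const)
    (hμ.ae_eventually_shiftSum_le (measurable_information μ k) hB (by positivity))
  set D : (m : ℕ) → Set (Word A d m) := fun m =>
    {w | wordDist μ m w < (A : ℝ) ^ (-(ε / 4 * (m : ℝ) ^ d)) * gridMixture μ k m w} with hD
  have hnn : ∀ m (w : Word A d m), 0 ≤ gridMixture μ k m w := fun m w =>
    Finset.sum_nonneg fun p _ => mul_nonneg
      (Finset.prod_nonneg fun _ _ => wordDist_nonneg k _) (by positivity)
  have hDm : ∀ m, μ.real {x | wordAt x m 0 ∈ D m} ≤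
      (A : ℝ) ^ (-(ε / 4 * (m : ℝ) ^ d)) * (k : ℝ) ^ d := by
    intro m
    rw [measureReal_wordAt_mem]
    refine le_trans ?_ (mul_le_mul_of_nonneg_left (sum_gridMixture_le (μ := μ) hk m)
      (by positivity))
    rw [Finset.mul_sum]
    refine Finset.sum_le_sum fun w _ => ?_
    split_ifs with hw
    · exact hw.le
    · exact mul_nonneg (by positivity) (hnn m w)
  have hlim := ((tendsto_rpow_neg_mul_pow_zero hA hd hε4).mul_const ((k : ℝ) ^ d)).add hGt
  rw [zero_mul, add_zero] at hlim
  refine squeeze_zero' (Eventually.of_forall fun _ => measureReal_nonneg) ?_ hlim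
  filter_upwards [eventually_pow_sub_sub_pow_le d (k - 1) hε4] with m hm
  refine le_trans ?_ (add_le_add_left (hDm m) _)
  refine le_trans (ENNReal.toReal_mono (measure_ne_top _ _) (measure_mono_ae ?_)) (measureReal_union_le _ _)
  filter_upwards [ae_wordDist_pos hμ.1 k] with x hx hxm
  change x ∈ _ ∪ (G m)ᶜ
  by_contra hcon
  simp only [Set.mem_union, not_or, Set.mem_compl_iff, not_not] at hcon
  obtain ⟨hxD, hxG⟩ := hcon
  have h1 : (A : ℝ) ^ (-(ε / 4 * (m : ℝ) ^ d)) * gridMixture μ k m (wordAt x m 0) ≤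
      wordDist μ m (wordAt x m 0) := not_lt.1 hxD
  have h2 := exists_rpow_le_gridMixture hA hk m hx
  have h3 : wordDist μ m (wordAt x m 0) < (A : ℝ) ^ (-((m : ℝ) ^ d * (h + ε))) := hxm
  have h5 := (mul_le_mul_of_nonneg_left h2
    (show 0 ≤ (A : ℝ) ^ (-(ε / 4 * (m : ℝ) ^ d)) by positivity)).trans_lt (h1.trans_lt h3)
  rw [← Real.rpow_add hA0, Real.rpow_lt_rpow_left_iff hA1] at h5
  have h6 : shiftSum (information μ k) m x / (k : ℝ) ^ d ≤ (h + ε / 4 + ε / 4) * (m : ℝ) ^ d := by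
    rw [div_le_iff₀ hkd]
    have h7 : shiftSum (information μ k) m x ≤
      (∫ y, information μ k y ∂μ + ε / 4 * (k : ℝ) ^ d) * (m : ℝ) ^ d := hxG
    rw [integral_information] at h7
    have : (entH A (wordDist μ k)) * (m : ℝ) ^ d ≤ ((h + ε / 4) * (k : ℝ) ^ d) * (m : ℝ) ^ d := by
      gcongr
    linarith
  linarith

theorem logb_natCast_le_self {A : ℕ} (hA : 2 ≤ A) {y : ℝ} (hy : 0 < y) :
    Real.logb A y ≤ y := by
  have hA2 : (2 : ℝ) ≤ A := by exact_mod_cast hA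
  have h2 : Real.log 2 ≤ Real.log A := Real.log_le_log two_pos hA2
  have h3 := Real.log_two_gt_d9
  have h4 := Real.log_two_lt_d9
  have h5 := Real.log_le_sub_one_of_pos (half_pos hy)
  rw [Real.log_div hy.ne' two_ne_zero] at h5
  rw [Real.logb, div_le_iff₀ (by linarith)]
  nlinarith

theorem ErgodicShift.tendsto_measureReal_lt_wordDist [NeZero A] (hA : 2 ≤ A) (hd : 1 ≤ d)
    (hμ : ErgodicShift μ) {h : ℝ} (hrate : HasEntropyRate μ h) {η : ℝ} (hη : 0 < η) :
    Tendsto (fun m : ℕ => μ.real {x | wordAt x m 0 ∈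
      {w | (A : ℝ) ^ (-((m : ℝ) ^ d * (h - η))) < wordDist μ m w}}) atTop (𝓝 0) := by
  classical
  have hA1 : (1 : ℝ) < A := by exact_mod_cast hA
  have hA0 : (0 : ℝ) < A := by linarith
  have hh : 0 ≤ h := hrate.nonneg hA
  refine tendsto_order.2 ⟨fun a ha => Eventually.of_forall fun _ => ha.trans_le measureReal_nonneg,
    fun a ha => ?_⟩
  set ε := η * a / 5 with hεdef
  have hε : 0 < ε := by positivity
  have hK : Tendsto (fun m : ℕ => 1 / (m : ℝ) ^ d) atTop (𝓝 0) := by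
    simp only [one_div]
    exact ((tendsto_pow_atTop (by omega : d ≠ 0)).comp
      (tendsto_natCast_atTop_atTop (R := ℝ))).inv_tendsto_atTop
  filter_upwards [(hμ.tendsto_measureReal_wordDist_lt hA hd hrate hε).eventually (gt_mem_nhds hε),
    hrate.eventually (lt_mem_nhds (sub_lt_self h hε)), hK.eventually (gt_mem_nhds hε),
    eventually_gt_atTop 0] with m hB hH hK hm
  have hKpos : (0 : ℝ) < (m : ℝ) ^ d := by positivity
  replace hB := (measureReal_wordAt_mem (μ := μ) m
    {w | wordDist μ m w < (A : ℝ) ^ (-((m : ℝ) ^ d * (h + ε)))}).symm.trans_lt hB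
  refine (measureReal_wordAt_mem (μ := μ) m
    {w | (A : ℝ) ^ (-((m : ℝ) ^ d * (h - η))) < wordDist μ m w}).trans_lt ?_
  rw [lt_div_iff₀ hKpos] at hH
  rw [div_lt_iff₀ hKpos] at hK
  set K := (m : ℝ) ^ d with hKdef
  set p := wordDist μ m
  have hpt : ∀ w, -(p w * Real.logb A (p w)) ≤ K * (h + ε) * p w
      - K * η * (if w ∈ {w | (A : ℝ) ^ (-(K * (h - η))) < p w} then p w else 0)
      + K * (if w ∈ {w | p w < (A : ℝ) ^ (-(K * (h + ε)))} then p w else 0)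
      + (A : ℝ) ^ (-K) := by
    intro w
    have hp0 : 0 ≤ p w := wordDist_nonneg m w
    have hAK : 0 < (A : ℝ) ^ (-K) := by positivity
    rcases hp0.eq_or_lt with hp | hp
    · simp only [← hp, zero_mul, mul_zero, ite_self, neg_zero, sub_zero, add_zero, zero_add]
      exact hAK.le
    have hlog1 : ∀ b : ℝ, p w < (A : ℝ) ^ b ↔ Real.logb A (p w) < b := fun b =>
      (Real.logb_lt_iff_lt_rpow hA1 hp).symm
    have hlog2 : ∀ b : ℝ, (A : ℝ) ^ b < p w ↔ b < Real.logb A (p w) := fun b =>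
      (Real.lt_logb_iff_rpow_lt hA1 hp).symm
    simp only [Set.mem_ofPred_eq, hlog1, hlog2]
    set l := Real.logb A (p w)
    have hKε : 0 < K * ε := by positivity
    have hKη : 0 < K * η := by positivity
    have hKh : 0 ≤ K * h := by positivity
    by_cases h1 : l < -(K * (h + ε))
    · have h2 : ¬ -(K * (h - η)) < l := by
        intro h2
        nlinarith
      rw [if_pos h1, if_neg h2]
      have h3 := logb_natCast_le_self hA (show 0 < (A : ℝ) ^ (-K) / p w by positivity)
      rw [Real.logb_div hAK.ne' hp.ne', Real.logb_rpow hA0 hA1.ne', le_div_iff₀ hp] at h3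
      nlinarith [mul_nonneg (show 0 ≤ K * h + K * ε by positivity) hp0]
    · rw [if_neg h1]
      by_cases h2 : -(K * (h - η)) < l
      · rw [if_pos h2]
        nlinarith [mul_pos hKε hp, mul_le_mul_of_nonneg_left h2.le hp0]
      · rw [if_neg h2]
        nlinarith [mul_le_mul_of_nonneg_left (not_lt.1 h1) hp0]
  have hsum := Finset.sum_le_sum fun w (_ : w ∈ (Finset.univ : Finset (Word A d m))) => hpt w
  rw [Finset.sum_add_distrib, Finset.sum_add_distrib, Finset.sum_sub_distrib, ← Finset.mul_sum,
    ← Finset.mul_sum, ← Finset.mul_sum, sum_wordDist, Finset.sum_neg_distrib] at hsum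
  have hone : ∑ _w : Word A d m, (A : ℝ) ^ (-K) = 1 := by
    have : ((Fintype.card (Word A d m) : ℕ) : ℝ) = (A : ℝ) ^ K := by
      rw [hKdef, ← Nat.cast_pow, Real.rpow_natCast]
      simp
    rw [Finset.sum_const, Finset.card_univ, nsmul_eq_mul, this, Real.rpow_neg hA0.le,
      mul_inv_cancel₀ (by positivity)]
  rw [hone] at hsum
  change (h - ε) * K < -∑ w, p w * Real.logb A (p w) at hH
  set PL := ∑ w, if w ∈ {w | (A : ℝ) ^ (-(K * (h - η))) < p w} then p w else 0
  set PB := ∑ w, if w ∈ {w | p w < (A : ℝ) ^ (-(K * (h + ε)))} then p w else 0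
  have h1 : K * (η * PL) < K * (η * a) := by
    have : K * PB < K * ε := by gcongr
    have : K * (η * a) = 5 * (K * ε) := by rw [hεdef]; ring
    nlinarith [mul_pos hKpos hε]
  exact lt_of_mul_lt_mul_left (lt_of_mul_lt_mul_left h1 hKpos.le) hη.le

theorem ErgodicShift.tendsto_measureReal_notMem_entropyTypical [NeZero A] (hA : 2 ≤ A)
    (hd : 1 ≤ d) (hμ : ErgodicShift μ) {h : ℝ} (hrate : HasEntropyRate μ h) {δ : ℝ} (hδ : 0 < δ) :
    Tendsto (fun m : ℕ => μ.real {x | wordAt x m 0 ∈ (entropyTypical μ h δ m)ᶜ}) atTop (𝓝 0) := by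
  have hlim := (hμ.tendsto_measureReal_wordDist_lt hA hd hrate hδ).add
    (hμ.tendsto_measureReal_lt_wordDist hA hd hrate hδ)
  rw [add_zero] at hlim
  refine squeeze_zero (fun _ => measureReal_nonneg) (fun m => ?_) hlim
  refine le_trans (measureReal_mono ?_) (measureReal_union_le _ _)
  intro x hx
  have hx' : ¬ (_ ∧ _) := hx
  rw [not_and_or, not_le, not_le] at hx'
  exact hx'

end Marginals

/-! ### The empirical mass of the typical sampling set -/

open Classical in
theorem ncard_fin_eq_card_filter_box (N : ℕ) (P : Site d → Prop) :
    Set.ncard {r : Fin d → Fin N | P fun j => r j} = ((box d N).filter P).card := by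
  rw [← Set.ncard_coe_finset]
  refine Set.ncard_congr (fun r _ j => (r j : ℕ)) ?_ ?_ ?_
  · intro r hr
    exact Finset.mem_coe.2 (Finset.mem_filter.2 ⟨mem_box.2 fun j => (r j).2, hr⟩)
  · intro r r' _ _ h
    exact funext fun j => Fin.ext (congrFun h j)
  · intro s hs
    obtain ⟨hs, hP⟩ := Finset.mem_filter.1 (Finset.mem_coe.1 hs)
    exact ⟨fun j => ⟨s j, mem_box.1 hs j⟩, hP, rfl⟩

theorem sum_sum_block_le {k N n : ℕ} (hk : 0 < k) (hN : k * N ≤ n) {f : Site d → ℝ}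
    (hf : ∀ i, 0 ≤ f i) :
    ∑ r ∈ box d N, ∑ a ∈ box d k, f (corner k a r) ≤ ∑ i ∈ box d n, f i := by
  rw [Finset.sum_comm, show n = (n + k - 1) + 1 - k by omega, ← sum_sum_grid hk]
  refine Finset.sum_le_sum fun a ha => Finset.sum_le_sum_of_subset_of_nonneg ?_ fun _ _ _ => hf _
  intro r hr
  refine (mem_grid hk).2 fun j => ?_
  have h1 := mem_box.1 hr j
  have h2 := mem_box.1 ha j
  have h3 : k * (r j + 1) ≤ k * N := Nat.mul_le_mul_left k h1
  rw [mul_add, mul_one] at h3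
  omega

theorem wordAt_mem_samplingTypical [NeZero A] {μ : Measure (Config A d)} {m k : ℕ} (hm : 0 < m)
    {h δ : ℝ} {x : Config A d} {c : Site d}
    (hc : (1 - δ) * (k : ℝ) ^ d ≤ ∑ i ∈ box d (k + 1 - m),
      (entropyTypical μ h δ m).indicator (1 : Word A d m → ℝ) (wordAt x m (c + i))) :
    wordAt x k c ∈ samplingTypical μ h δ m k := by
  classical
  rw [← sum_sum_grid hm] at hc
  have hconst : ∑ _p ∈ box d m, (1 - δ) * ((k : ℝ) / (m : ℝ)) ^ d = (1 - δ) * (k : ℝ) ^ d := by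
    rw [Finset.sum_const, card_box, nsmul_eq_mul, Nat.cast_pow, div_pow]
    field_simp
  obtain ⟨p, hp, hle⟩ := Finset.exists_le_of_sum_le (s := box d m) ⟨0, mem_box.2 fun _ => hm⟩
    (hconst.trans_le hc)
  refine ⟨p, mem_box.1 hp, ?_⟩
  rw [ncard_typicalBlocks hm, Finset.natCast_card_filter]
  refine hle.trans (Finset.sum_le_sum fun r hr => ?_)
  rw [subw_wordAt x c (corner m p r) fun j => (mem_grid hm).1 hr j, Set.indicator_apply]
  rfl

theorem lt_empProb_samplingTypical [NeZero A] {μ : Measure (Config A d)} {m k n : ℕ}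
    (hm : 0 < m) (hk : 0 < k) {h δ : ℝ} (hδ : 0 < δ) {x : Config A d}
    (hmk : (1 - δ / 4) * (k : ℝ) ^ d ≤ ((k + 1 - m : ℕ) : ℝ) ^ d) (hN : 0 < n / k)
    (hn : (n : ℝ) ^ d ≤ 2 * ((k : ℝ) ^ d * ((n / k : ℕ) : ℝ) ^ d))
    (hbad : ∑ i ∈ box d n, (entropyTypical μ h (δ / 2) m)ᶜ.indicator (1 : Word A d m → ℝ)
      (wordAt x m i) ≤ δ ^ 2 / 16 * (n : ℝ) ^ d) :
    1 - δ < empProb x k n (samplingTypical μ h (δ / 2) m k) := by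
  classical
  set S := entropyTypical μ h (δ / 2) m
  set N := n / k with hNdef
  set P : Site d → Prop := fun r =>
    wordAt x k (fun j => k * r j) ∈ samplingTypical μ h (δ / 2) m k with hP
  have hkd : (0 : ℝ) < (k : ℝ) ^ d := by positivity
  have hNd : (0 : ℝ) < (N : ℝ) ^ d := by positivity
  set b : Site d → ℝ := fun i => Sᶜ.indicator (1 : Word A d m → ℝ) (wordAt x m i) with hb
  have hb0 : ∀ i, 0 ≤ b i := fun i => Set.indicator_nonneg (fun _ _ => zero_le_one) _
  have hblock : ∀ r, ¬ P r → δ / 4 * (k : ℝ) ^ d ≤ ∑ a ∈ box d k, b (corner k a r) := by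
    intro r hr
    by_contra! hlt
    refine hr (wordAt_mem_samplingTypical hm ?_)
    have h1 : ∑ a ∈ box d (k + 1 - m), b (corner k a r) ≤ ∑ a ∈ box d k, b (corner k a r) :=
      Finset.sum_le_sum_of_subset_of_nonneg (box_mono (by omega)) fun _ _ _ => hb0 _
    have h2 : ∑ i ∈ box d (k + 1 - m), (S.indicator (1 : Word A d m → ℝ)
        (wordAt x m ((fun j => k * r j) + i)) + b (corner k i r)) = ((k + 1 - m : ℕ) : ℝ) ^ d := by
      rw [← Nat.cast_pow, ← card_box, Finset.card_eq_sum_ones, Nat.cast_sum]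
      refine Finset.sum_congr rfl fun i _ => ?_
      rw [Nat.cast_one]
      exact congrFun (Set.indicator_self_add_compl S (1 : Word A d m → ℝ)) _
    rw [Finset.sum_add_distrib] at h2
    linarith
  have hsum : ((box d N).filter fun r => ¬ P r).card * (δ / 4 * (k : ℝ) ^ d) ≤
      δ ^ 2 / 16 * (2 * ((k : ℝ) ^ d * (N : ℝ) ^ d)) := by
    calc _ = ∑ _r ∈ (box d N).filter fun r => ¬ P r, δ / 4 * (k : ℝ) ^ d := by
          rw [Finset.sum_const, nsmul_eq_mul]
      _ ≤ ∑ r ∈ (box d N).filter fun r => ¬ P r, ∑ a ∈ box d k, b (corner k a r) :=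
          Finset.sum_le_sum fun r hr => hblock r (Finset.mem_filter.1 hr).2
      _ ≤ ∑ r ∈ box d N, ∑ a ∈ box d k, b (corner k a r) :=
          Finset.sum_le_sum_of_subset_of_nonneg (Finset.filter_subset _ _) fun _ _ _ =>
            Finset.sum_nonneg fun _ _ => hb0 _
      _ ≤ ∑ i ∈ box d n, b i := sum_sum_block_le hk (Nat.mul_div_le n k) hb0
      _ ≤ _ := hbad.trans (by gcongr)
  have hfew : (((box d N).filter fun r => ¬ P r).card : ℝ) ≤ δ / 2 * (N : ℝ) ^ d := by
    refine le_of_mul_le_mul_right (hsum.trans_eq ?_) (show 0 < δ / 4 * (k : ℝ) ^ d by positivity)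
    ring
  have hcard : (((box d N).filter P).card : ℝ) + ((box d N).filter fun r => ¬ P r).card =
      (N : ℝ) ^ d := by
    exact_mod_cast (Finset.card_filter_add_card_filter_not P).trans (card_box N)
  rw [empProb, ← hNdef, ncard_fin_eq_card_filter_box N P, lt_div_iff₀ hNd]
  nlinarith

theorem eventually_pow_le_two_mul_div_pow (d : ℕ) {k : ℕ} (hk : 0 < k) :
    ∀ᶠ n : ℕ in atTop, 0 < n / k ∧ (n : ℝ) ^ d ≤ 2 * ((k : ℝ) ^ d * ((n / k : ℕ) : ℝ) ^ d) := by
  filter_upwards [eventually_pow_sub_sub_pow_le d k (one_half_pos (α := ℝ)),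
    eventually_ge_atTop k] with n hn hkn
  refine ⟨Nat.div_pos hkn hk, ?_⟩
  have h1 : n - k ≤ k * (n / k) := by
    have := Nat.div_add_mod n k
    have := Nat.mod_lt n hk
    omega
  have h2 : ((n - k : ℕ) : ℝ) ^ d ≤ ((k * (n / k) : ℕ) : ℝ) ^ d := by gcongr
  rw [Nat.cast_mul, mul_pow] at h2
  linarith

theorem eventually_mul_pow_le_succ_sub_pow (d : ℕ) {m : ℕ → ℕ}
    (hm : Tendsto (fun k : ℕ => (m k : ℝ) / (k : ℝ)) atTop (𝓝 0)) {ε : ℝ} (hε : 0 < ε) :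
    ∀ᶠ k : ℕ in atTop, (1 - ε) * (k : ℝ) ^ d ≤ ((k + 1 - m k : ℕ) : ℝ) ^ d := by
  have hlim : Tendsto (fun k : ℕ => (1 - (m k : ℝ) / (k : ℝ)) ^ d) atTop (𝓝 1) := by
    simpa using (hm.const_sub 1).pow d
  filter_upwards [hlim.eventually (lt_mem_nhds (sub_lt_self 1 hε)),
    hm.eventually (gt_mem_nhds one_pos), eventually_gt_atTop 0] with k h1 h2 hk
  have hk0 : (0 : ℝ) < k := by exact_mod_cast hk
  have h3 : (k : ℝ) - m k ≤ ((k + 1 - m k : ℕ) : ℝ) := by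
    rw [sub_le_iff_le_add]
    exact_mod_cast (show k ≤ k + 1 - m k + m k by omega)
  have h4 : 0 ≤ (k : ℝ) - m k := by
    rw [div_lt_one hk0] at h2
    linarith
  refine le_trans ?_ (pow_le_pow_left₀ h4 h3 d)
  calc _ ≤ (1 - (m k : ℝ) / (k : ℝ)) ^ d * (k : ℝ) ^ d := by gcongr
    _ = _ := by rw [← mul_pow, sub_mul, one_mul, div_mul_cancel₀ _ hk0.ne']

theorem ErgodicShift.ae_eventually_lt_empProb [NeZero A] (hA : 2 ≤ A) (hd : 1 ≤ d)
    {μ : Measure (Config A d)} [IsProbabilityMeasure μ] (hμ : ErgodicShift μ) {h : ℝ}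
    (hrate : HasEntropyRate μ h) {δ : ℝ} (hδ : 0 < δ) {m : ℕ → ℕ} (hm1 : Tendsto m atTop atTop)
    (hm2 : Tendsto (fun k : ℕ => (m k : ℝ) / (k : ℝ)) atTop (𝓝 0)) :
    ∀ᵐ x ∂μ, ∀ᶠ k in atTop, ∀ᶠ n in atTop,
      1 - δ < empProb x k n (samplingTypical μ h (δ / 2) (m k) k) := by
  have hc : 0 < δ ^ 2 / 32 := by positivity
  have hall : ∀ᵐ x ∂μ, ∀ l : ℕ, ∀ᶠ n : ℕ in atTop, ∑ i ∈ box d n,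
      (entropyTypical μ h (δ / 2) l)ᶜ.indicator (1 : Word A d l → ℝ) (wordAt x l i) ≤
      (μ.real {x | wordAt x l 0 ∈ (entropyTypical μ h (δ / 2) l)ᶜ} + δ ^ 2 / 32) *
        (n : ℝ) ^ d := by
    refine ae_all_iff.2 fun l => ?_
    set E : Set (Config A d) := {x | wordAt x l 0 ∈ (entropyTypical μ h (δ / 2) l)ᶜ}
    have hE : MeasurableSet E := measurable_wordAt l 0 (Set.to_countable _).measurableSet
    have := hμ.ae_eventually_shiftSum_le (f := E.indicator 1) (B := 1)
      (measurable_one.indicator hE) (fun x => by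
        by_cases hx : x ∈ E <;> simp [hx]) hc
    rw [integral_indicator_one hE] at this
    filter_upwards [this] with x hx
    filter_upwards [hx] with n hn
    refine le_trans (Finset.sum_le_sum fun i _ => ?_) hn
    rw [wordAt_eq_shift]
    rfl
  filter_upwards [hall] with x hx
  filter_upwards [hm1.eventually ((hμ.tendsto_measureReal_notMem_entropyTypical hA hd hrate
      (half_pos hδ)).eventually (gt_mem_nhds hc)), hm1.eventually (eventually_gt_atTop 0),
    eventually_mul_pow_le_succ_sub_pow d hm2 (show 0 < δ / 4 by positivity),
    eventually_gt_atTop 0] with k hk1 hk2 hk3 hk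
  filter_upwards [hx (m k), eventually_pow_le_two_mul_div_pow d hk] with n hn1 hn2
  refine lt_empProb_samplingTypical hk2 hk hδ hk3 hn2.1 hn2.2 (hn1.trans ?_)
  gcongr
  linarith

/-- For ergodic `μ` with entropy rate `h`, `δ ∈ (0,1/2)` and any
`m = m(k) → ∞` with `m(k)/k → 0`: (i) eventually in `k`, the typical sampling set
`𝒯_k^μ(δ/2, m(k))` has log-cardinality at most `(h+δ)k^d`; and (ii) almost surely, for every
sufficiently large `k` its empirical mass eventually exceeds `1-δ`. -/
theorem sampling_typical_properties
    (A d : ℕ) [NeZero A] (hA : 2 ≤ A) (hd : 1 ≤ d)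
    (μ : Measure (Config A d)) [IsProbabilityMeasure μ] (hμ : ErgodicShift μ)
    (h : ℝ) (hrate : HasEntropyRate μ h)
    (δ : ℝ) (hδ0 : 0 < δ) (hδ1 : δ < 1 / 2)
    (m : ℕ → ℕ) (hm1 : Tendsto m atTop atTop)
    (hm2 : Tendsto (fun k : ℕ => (m k : ℝ) / (k : ℝ)) atTop (𝓝 0)) :
    (∃ k0 : ℕ, ∀ k ≥ k0,
      Real.logb A (Set.ncard (samplingTypical μ h (δ / 2) (m k) k)) / (k : ℝ) ^ d ≤ h + δ) ∧
    ∀ᵐ x ∂μ, ∃ k1 : ℕ, ∀ k ≥ k1, ∃ n0 : ℕ, ∀ n ≥ n0,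
      1 - δ < empProb x k n (samplingTypical μ h (δ / 2) (m k) k) := by
  refine ⟨eventually_atTop.1 ?_, ?_⟩
  · filter_upwards [eventually_logb_ncard_samplingTypical_le (μ := μ) hA hd
      (hrate.nonneg hA) (half_pos hδ0) (by linarith) hm1 hm2] with k hk
    linarith
  · filter_upwards [hμ.ae_eventually_lt_empProb hA hd hrate hδ0 hm1 hm2] with x hx
    exact (eventually_atTop.1 hx).imp fun k1 hk1 k hk => eventually_atTop.1 (hk1 k hk)

end SRU1408
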